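/- arXiv:0808.3192 — 2 statements merged into one kernel-verified Lean document; each statement's English description precedes it below -/
import Mathlib

section
/- Let f be a probability density on ℝ with ∫ v² f(v) dv = 1 and H(f|γ) < ∞. Then there exists a sequence {μ^{(N)}} of permutation-symmetric probability measures, μ^{(N)} on S^{N-1}(√N), which is entropically f(v)dv-chaotic: for every k the marginal P_k μ^{(N)} converges weakly (against bounded continuous functions on ℝ^k) to (f dv)^{⊗k} as N → ∞, and H(μ^{(N)} | σ^N)/N → H(f|γ). -/
/-!
Write `m` for the measure with density `f` and `γ` for the standard Gaussian. The chaotic family is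
the radial projection of the product measure `m^{⊗N}` onto the sphere of radius `√N`; recall that
the uniform measure on this sphere is the radial projection of `γ^{⊗N}`.

*Marginals.* Realize all the `m^{⊗N}` on one infinite product space. Since `m` has second moment `1`,
the strong law of large numbers shows that the projection multiplies each fixed coordinate by a
factor tending almost surely to `1` (`tendsto_marginal`).

*Upper bound on the entropy.* By the data processing inequality, the entropy on the sphere is at
most `H(m^{⊗N} | γ^{⊗N}) = N H(m | γ)` (`klDiv_radProj_le`, `klDiv_pi`).

*Lower bound on the entropy.* The entropy inequality `integral_sub_log_le` is applied to
`∑ i, g (v i)` with `g` continuous, compactly supported and nearly optimal for `H(m | γ)`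
(`exists_test_function`). By symmetry and convergence of marginals the linear term is asymptotic to
`N ∫ g dm`. The exponential moment on the sphere must be at most `exp (o(N)) (∫ exp g dγ)^N`
(`integral_exp_sigmaN_le`). As a Gaussian integral its integrand is homogeneous of degree `0`;
changing the variance of the Gaussian leaves such an integral unchanged, which forces the weight to
concentrate on the shell of radii close to `√N` (`lintegral_le_two_mul_shell`), and there the
projection moves `g` by at most a small constant per coordinate.
-/

open MeasureTheory ProbabilityTheory Filter Set Classical
open scoped ENNReal NNReal Topology BigOperators

noncomputable section

/-- The uniform (rotation-invariant) probability measure on the sphere of radius `r`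
in `ℝ^N`, realized as the pushforward of the standard Gaussian under radial projection. -/
def uniformSphere (N : ℕ) (r : ℝ) : Measure (Fin N → ℝ) :=
  Measure.map (fun x => (r / Real.sqrt (∑ i, x i ^ 2)) • x)
    (Measure.pi fun _ : Fin N => gaussianReal 0 1)

/-- `σ^N`, the uniform probability measure on `S^{N-1}(√N)`. -/
def sigmaN (N : ℕ) : Measure (Fin N → ℝ) := uniformSphere N (Real.sqrt N)

/-- `Z_N(f,r) = ∫_{S^{N-1}(r)} f^{⊗N} dσ^N_r`. -/
def ZN (N : ℕ) (f : ℝ → ℝ) (r : ℝ) : ℝ :=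
  ∫ v, (∏ i, f (v i)) ∂(uniformSphere N r)

/-- Relative entropy `H(μ|ν)`, valued in `ℝ≥0∞`. -/
def relEntropy {α : Type*} [MeasurableSpace α] (μ ν : Measure α) : ℝ≥0∞ :=
  if μ ≪ ν ∧ Integrable (fun x => Real.log (μ.rnDeriv ν x).toReal) μ then
    ENNReal.ofReal (∫ x, Real.log (μ.rnDeriv ν x).toReal ∂μ)
  else ⊤

/-- The measure `f(v) dv` on `ℝ`. -/
def densityMeasure (f : ℝ → ℝ) : Measure ℝ :=
  volume.withDensity fun v => ENNReal.ofReal (f v)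

/-- The conditioned product measure `[μ^{⊗N}]_{S^{N-1}(√N)}`. -/
def condProd (f : ℝ → ℝ) (N : ℕ) : Measure (Fin N → ℝ) :=
  (sigmaN N).withDensity fun v =>
    ENNReal.ofReal ((∏ i, f (v i)) / ZN N f (Real.sqrt N))

/-- Projection to the first `k` coordinates (junk value `0` if `N < k`). -/
def projFun (N k : ℕ) (v : Fin N → ℝ) : Fin k → ℝ :=
  fun i => if h : (i : ℕ) < N then v ⟨i, h⟩ else 0

/-- `P_k μ`, the marginal on the first `k` coordinates. -/
def marginal (N k : ℕ) (μ : Measure (Fin N → ℝ)) : Measure (Fin k → ℝ) :=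
  Measure.map (projFun N k) μ

/-- The rotation `R_{i,j,θ}` in the `(v_i,v_j)`-plane. -/
def kacRot (N : ℕ) (i j : Fin N) (θ : ℝ) (v : Fin N → ℝ) : Fin N → ℝ :=
  Function.update (Function.update v i (Real.cos θ * v i - Real.sin θ * v j)) j
    (Real.sin θ * v i + Real.cos θ * v j)

/-- The Kac transition operator `Q_N`. -/
def kacQ (N : ℕ) (φ : (Fin N → ℝ) → ℝ) (v : Fin N → ℝ) : ℝ :=
  ((N : ℝ) * ((N : ℝ) - 1) / 2)⁻¹ *
    ∑ p ∈ Finset.univ.filter (fun p : Fin N × Fin N => p.1 < p.2),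
      (1 / (2 * Real.pi)) * ∫ θ in (0:ℝ)..(2 * Real.pi), φ (kacRot N p.1 p.2 θ v)

/-- The Kac generator `L_N = N (Q_N - I)`. -/
def kacL (N : ℕ) (φ : (Fin N → ℝ) → ℝ) (v : Fin N → ℝ) : ℝ :=
  (N : ℝ) * (kacQ N φ v - φ v)

/-- The standard Gaussian density `γ` on `ℝ`. -/
def gaussDens (v : ℝ) : ℝ := Real.exp (-(v ^ 2) / 2) / Real.sqrt (2 * Real.pi)

/-- The Maxwellian density `M_a` of variance `a`. -/
def maxwellian (a : ℝ) (v : ℝ) : ℝ :=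
  Real.exp (-(v ^ 2) / (2 * a)) / Real.sqrt (2 * Real.pi * a)

/-- The Wild convolution `f ∘ g`. -/
def wild (f g : ℝ → ℝ) (v : ℝ) : ℝ :=
  (1 / (2 * Real.pi)) *
    ∫ vs : ℝ, ∫ θ in (0:ℝ)..(2 * Real.pi),
      f (v * Real.cos θ - vs * Real.sin θ) * g (v * Real.sin θ + vs * Real.cos θ)

/-- `α_N(u) = u^{N/2-1} e^{-u/2}`. -/
def alphaN (N : ℕ) (u : ℝ) : ℝ := u ^ ((N : ℝ) / 2 - 1) * Real.exp (-u / 2)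

/-- `γ^{(N)}(r) = e^{-r²/2}/(2π)^{N/2}`. -/
def gammaDensN (N : ℕ) (r : ℝ) : ℝ :=
  Real.exp (-(r ^ 2) / 2) / (2 * Real.pi) ^ ((N : ℝ) / 2)

/-- `Z'_N(f,r) = ∫_{S^{N-1}(r)} (f/γ)^{⊗N} dσ^N_r`. -/
def ZN' (N : ℕ) (f : ℝ → ℝ) (r : ℝ) : ℝ :=
  ∫ v, (∏ i, f (v i) / gaussDens (v i)) ∂(uniformSphere N r)

/-! ### Relative entropy of product measures -/

/-- For probability measures the correction term in Mathlib's `klDiv` vanishes. -/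
lemma relEntropy_eq_klDiv {α : Type*} [MeasurableSpace α] (μ ν : Measure α)
    [IsProbabilityMeasure μ] [IsProbabilityMeasure ν] :
    relEntropy μ ν = InformationTheory.klDiv μ ν := by
  by_cases h : μ ≪ ν ∧ Integrable (llr μ ν) μ
  · rw [InformationTheory.klDiv_of_ac_of_integrable h.1 h.2]
    have : relEntropy μ ν = ENNReal.ofReal (∫ x, llr μ ν x ∂μ) := if_pos h
    rw [this]
    simp
  · have h1 : relEntropy μ ν = ⊤ := if_neg h
    rw [h1, eq_comm, InformationTheory.klDiv_eq_top_iff]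
    tauto

lemma pi_withDensity (ν : Measure ℝ) [IsProbabilityMeasure ν] (p : ℝ → ℝ≥0∞)
    (hp : Measurable p) [IsProbabilityMeasure (ν.withDensity p)] (N : ℕ) :
    Measure.pi (fun _ : Fin N => ν.withDensity p) =
      (Measure.pi fun _ : Fin N => ν).withDensity (fun x => ∏ i, p (x i)) := by
  refine Measure.pi_eq fun s hs => ?_
  rw [withDensity_apply _ (MeasurableSet.univ_pi hs), ← lintegral_indicator (MeasurableSet.univ_pi hs)]
  have h1 : ∀ x : Fin N → ℝ, (univ.pi s).indicator (fun x => ∏ i, p (x i)) x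
      = ∏ i, (s i).indicator p (x i) := by
    intro x
    by_cases hx : x ∈ univ.pi s
    · rw [indicator_of_mem hx]
      exact Finset.prod_congr rfl fun i _ => (indicator_of_mem (hx i (mem_univ i)) _).symm
    · rw [indicator_of_notMem hx]
      simp only [Set.mem_pi, not_forall] at hx
      obtain ⟨i, _, hi⟩ := hx
      exact (Finset.prod_eq_zero (Finset.mem_univ i) (indicator_of_notMem hi _)).symm
  simp_rw [h1]
  have hind : iIndepFun (fun (i : Fin N) (x : Fin N → ℝ) => (s i).indicator p (x i))
      (Measure.pi fun _ : Fin N => ν) :=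
    iIndepFun_pi fun i => (hp.indicator (hs i)).aemeasurable
  rw [lintegral_prod_eq_prod_lintegral_of_indepFun Finset.univ _ hind
    fun i => (hp.indicator (hs i)).comp (measurable_pi_apply i)]
  refine Finset.prod_congr rfl fun i _ => ?_
  rw [(measurePreserving_eval (fun _ : Fin N => ν) i).lintegral_comp (hp.indicator (hs i)),
    lintegral_indicator (hs i), withDensity_apply _ (hs i)]

lemma integrable_comp_eval (m : Measure ℝ) [IsProbabilityMeasure m] {N : ℕ} (i : Fin N)
    {L : ℝ → ℝ} (hL : Integrable L m) :
    Integrable (fun x : Fin N → ℝ => L (x i)) (Measure.pi fun _ : Fin N => m) :=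
  (measurePreserving_eval (fun _ : Fin N => m) i).integrable_comp_of_integrable hL

lemma integral_comp_eval (m : Measure ℝ) [IsProbabilityMeasure m] {N : ℕ} (i : Fin N)
    {L : ℝ → ℝ} (hL : Integrable L m) :
    ∫ x : Fin N → ℝ, L (x i) ∂(Measure.pi fun _ : Fin N => m) = ∫ v, L v ∂m := by
  have h := (measurePreserving_eval (fun _ : Fin N => m) i)
  have := integral_map h.measurable.aemeasurable (f := L) (by rw [h.map_eq]; exact hL.1)
  rw [h.map_eq] at this
  exact this.symm

section product
variable (m ν : Measure ℝ) [IsProbabilityMeasure m] [IsProbabilityMeasure ν]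

lemma pi_eq_withDensity (hac : m ≪ ν) (N : ℕ) :
    Measure.pi (fun _ : Fin N => m) =
      (Measure.pi fun _ : Fin N => ν).withDensity (fun x => ∏ i, m.rnDeriv ν (x i)) := by
  have h := Measure.withDensity_rnDeriv_eq m ν hac
  have : IsProbabilityMeasure (ν.withDensity (m.rnDeriv ν)) := by rw [h]; infer_instance
  have h2 := pi_withDensity ν (m.rnDeriv ν) (Measure.measurable_rnDeriv m ν) N
  rwa [h] at h2

lemma pi_ac (hac : m ≪ ν) (N : ℕ) :
    Measure.pi (fun _ : Fin N => m) ≪ Measure.pi (fun _ : Fin N => ν) := by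
  rw [pi_eq_withDensity m ν hac]
  exact withDensity_absolutelyContinuous _ _

lemma llr_pi (hac : m ≪ ν) (N : ℕ) :
    llr (Measure.pi fun _ : Fin N => m) (Measure.pi fun _ : Fin N => ν)
      =ᵐ[Measure.pi fun _ : Fin N => m] fun x => ∑ i, llr m ν (x i) := by
  have h1 : (Measure.pi fun _ : Fin N => m).rnDeriv (Measure.pi fun _ : Fin N => ν)
      =ᵐ[Measure.pi fun _ : Fin N => m] fun x => ∏ i, m.rnDeriv ν (x i) := by
    refine (pi_ac m ν hac N).ae_le ?_
    nth_rewrite 1 [pi_eq_withDensity m ν hac N]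
    exact Measure.rnDeriv_withDensity _ (Finset.measurable_prod _ fun i _ =>
      (Measure.measurable_rnDeriv m ν).comp (measurable_pi_apply i))
  have h2 : ∀ᵐ x ∂(Measure.pi fun _ : Fin N => m), ∀ i, 0 < m.rnDeriv ν (x i) :=
    ae_all_iff.2 fun i => Measure.tendsto_eval_ae_ae.eventually (Measure.rnDeriv_pos hac)
  have hlt : ∀ᵐ v ∂m, m.rnDeriv ν v < ⊤ := hac.ae_le (Measure.rnDeriv_lt_top m ν)
  have h3 : ∀ᵐ x ∂(Measure.pi fun _ : Fin N => m), ∀ i, m.rnDeriv ν (x i) < ⊤ :=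
    ae_all_iff.2 fun i => (measurePreserving_eval (fun _ : Fin N => m) i).quasiMeasurePreserving.ae hlt
  filter_upwards [h1, h2, h3] with x hx hx2 hx3
  rw [llr, hx, ENNReal.toReal_prod, Real.log_prod]
  · rfl
  · exact fun i _ => (ENNReal.toReal_pos (hx2 i).ne' (hx3 i).ne).ne'

lemma klDiv_pi (hac : m ≪ ν) (hint : Integrable (llr m ν) m) (N : ℕ) :
    InformationTheory.klDiv (Measure.pi fun _ : Fin N => m) (Measure.pi fun _ : Fin N => ν)
      = ENNReal.ofReal (N * ∫ v, llr m ν v ∂m) := by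
  have hi : ∀ i : Fin N, Integrable (fun x : Fin N → ℝ => llr m ν (x i))
      (Measure.pi fun _ : Fin N => m) := fun i => integrable_comp_eval m i hint
  have h := llr_pi m ν hac N
  rw [InformationTheory.klDiv_of_ac_of_integrable (pi_ac m ν hac N)
    ((integrable_congr h).2 (integrable_finsetSum _ fun i _ => hi i)), integral_congr_ae h,
    integral_finsetSum _ fun i _ => hi i]
  simp [integral_comp_eval m _ hint]

end product

/-- The entropy inequality (one half of the Donsker–Varadhan variational formula). -/
lemma integral_sub_log_le {α : Type*} [MeasurableSpace α] (μ ν : Measure α)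
    [IsProbabilityMeasure μ] [IsProbabilityMeasure ν] (hac : μ ≪ ν)
    (hint : Integrable (llr μ ν) μ) (Φ : α → ℝ) (hΦ : Integrable Φ μ)
    (hexp : Integrable (fun x => Real.exp (Φ x)) ν) :
    ∫ x, Φ x ∂μ - Real.log (∫ x, Real.exp (Φ x) ∂ν) ≤
      (InformationTheory.klDiv μ ν).toReal := by
  have : IsProbabilityMeasure (ν.tilted Φ) := isProbabilityMeasure_tilted hexp
  have h1 := integral_llr_tilted_right hac hΦ hexp hint
  have h2 := InformationTheory.integral_llr_add_sub_measure_univ_nonneg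
    (hac.trans (absolutelyContinuous_tilted hexp)) (integrable_llr_tilted_right hac hΦ hint hexp)
  rw [InformationTheory.toReal_klDiv hac hint]
  simp only [probReal_univ] at h2 ⊢
  linarith

/-! ### Gaussian concentration against homogeneous weights -/

lemma gaussianReal_sq_eq (s : ℝ) (hs : 0 < s) :
    gaussianReal 0 (.mk (s ^ 2) (sq_nonneg s)) = (gaussianReal 0 1).withDensity
      (fun x => ENNReal.ofReal (s⁻¹ * Real.exp ((1 - 1 / s ^ 2) * x ^ 2 / 2))) := by
  have h0 : (NNReal.mk (s ^ 2) (sq_nonneg s)) ≠ 0 := by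
    intro h
    have := congrArg NNReal.toReal h
    simp at this
    exact hs.ne' this
  rw [gaussianReal_of_var_ne_zero _ h0, gaussianReal_of_var_ne_zero _ one_ne_zero,
    ← withDensity_mul _ (measurable_gaussianPDF 0 1) (by fun_prop)]
  congr 1
  funext x
  simp only [gaussianPDF, Pi.mul_apply]
  rw [← ENNReal.ofReal_mul (gaussianPDFReal_nonneg _ _ _)]
  congr 1
  simp only [gaussianPDFReal, NNReal.coe_mk, NNReal.coe_one, mul_one, sub_zero]
  rw [Real.sqrt_mul (by positivity), Real.sqrt_sq hs.le, mul_inv]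
  rw [show -x ^ 2 / (2 * s ^ 2) = -x ^ 2 / 2 + (1 - 1 / s ^ 2) * x ^ 2 / 2 by field_simp; ring,
    Real.exp_add]
  ring

/-- Scaling identity: the Gaussian integral of a `0`-homogeneous function does not change when the
variance is changed from `1` to `s ^ 2`. -/
lemma lintegral_scale {N : ℕ} (h : (Fin N → ℝ) → ℝ≥0∞) (hm : Measurable h) (s : ℝ) (hs : 0 < s)
    (hh : ∀ x, h (s • x) = h x) :
    ∫⁻ x, (∏ i, ENNReal.ofReal (s⁻¹ * Real.exp ((1 - 1 / s ^ 2) * x i ^ 2 / 2))) * h x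
      ∂(Measure.pi fun _ : Fin N => gaussianReal 0 1) =
    ∫⁻ x, h x ∂(Measure.pi fun _ : Fin N => gaussianReal 0 1) := by
  have hmap : (gaussianReal 0 1).map (fun x => s * x) =
      gaussianReal 0 (.mk (s ^ 2) (sq_nonneg s)) := by
    simpa using gaussianReal_map_const_mul (μ := 0) (v := 1) s
  have hpm : (Measure.pi fun _ : Fin N => gaussianReal 0 1).map (fun x => s • x) =
      Measure.pi (fun _ : Fin N => gaussianReal 0 (.mk (s ^ 2) (sq_nonneg s))) := by
    have := Measure.pi_map_pi (μ := fun _ : Fin N => gaussianReal 0 1)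
      (f := fun _ x => s * x) (hμ := fun _ => by rw [hmap]; infer_instance)
      (fun _ => by fun_prop)
    rw [hmap] at this
    exact this
  have hpr : IsProbabilityMeasure ((gaussianReal 0 1).withDensity
      (fun x => ENNReal.ofReal (s⁻¹ * Real.exp ((1 - 1 / s ^ 2) * x ^ 2 / 2)))) := by
    rw [← gaussianReal_sq_eq s hs]; infer_instance
  have hd := pi_withDensity (gaussianReal 0 1)
    (fun x => ENNReal.ofReal (s⁻¹ * Real.exp ((1 - 1 / s ^ 2) * x ^ 2 / 2))) (by fun_prop) N
  rw [← gaussianReal_sq_eq s hs, ← hpm] at hd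
  have hsm : Measurable (fun x : Fin N → ℝ => s • x) := by fun_prop
  calc _ = ∫⁻ x, h x ∂((Measure.pi fun _ : Fin N => gaussianReal 0 1).map (fun x => s • x)) := by
        rw [hd, lintegral_withDensity_eq_lintegral_mul _ _ hm]
        · rfl
        · fun_prop
    _ = _ := by
        rw [lintegral_map hm hsm]
        simp_rw [hh]

/-- Exponential smallness of the radial tails (`s > 1`: large radii, `s < 1`: small radii), uniformly
over `0`-homogeneous weights: on the tail the density in `lintegral_scale` is at least
`(s * exp (-(s ^ 2 - 1) / 2)) ^ (-N)`. -/
lemma lintegral_tail_le {N : ℕ} (h : (Fin N → ℝ) → ℝ≥0∞) (hm : Measurable h) (s : ℝ) (hs : 0 < s)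
    (hh : ∀ x, h (s • x) = h x) :
    ∫⁻ x in {x | 0 ≤ (1 - 1 / s ^ 2) * (∑ i, x i ^ 2 - N * s ^ 2)}, h x
      ∂(Measure.pi fun _ : Fin N => gaussianReal 0 1) ≤
    ENNReal.ofReal (s * Real.exp (-(s ^ 2 - 1) / 2)) ^ N *
      ∫⁻ x, h x ∂(Measure.pi fun _ : Fin N => gaussianReal 0 1) := by
  have hset : MeasurableSet {x : Fin N → ℝ | 0 ≤ (1 - 1 / s ^ 2) * (∑ i, x i ^ 2 - N * s ^ 2)} :=
    measurableSet_le measurable_const (by fun_prop)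
  rw [← lintegral_scale h hm s hs hh, ← lintegral_const_mul]
  swap
  · fun_prop
  refine (setLIntegral_mono' hset fun x hx => ?_).trans (setLIntegral_le_lintegral _ _)
  rw [← mul_assoc]
  refine le_mul_of_one_le_left' ?_
  rw [← ENNReal.ofReal_pow (by positivity),
    ← ENNReal.ofReal_prod_of_nonneg (fun i _ => by positivity),
    ← ENNReal.ofReal_mul (by positivity), ENNReal.one_le_ofReal]
  have hx' : 0 ≤ (1 - 1 / s ^ 2) * (∑ i, x i ^ 2 - N * s ^ 2) := hx
  rw [mul_pow, Finset.prod_mul_distrib, ← Real.exp_sum, ← Real.exp_nat_mul, Finset.prod_const,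
    Finset.card_univ, Fintype.card_fin,
    show ∀ a b : ℝ, s ^ N * a * (s⁻¹ ^ N * b) = (s * s⁻¹) ^ N * (a * b) by
      intro a b; rw [mul_pow]; ring, mul_inv_cancel₀ hs.ne', one_pow, one_mul, ← Real.exp_add,
    Real.one_le_exp_iff, ← Finset.sum_div, ← Finset.mul_sum]
  have : (N : ℝ) * (-(s ^ 2 - 1) / 2) + (1 - 1 / s ^ 2) * (∑ i, x i ^ 2) / 2 =
    (1 - 1 / s ^ 2) * (∑ i, x i ^ 2 - N * s ^ 2) / 2 := by field_simp; ring
  rw [this]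
  linarith

lemma tail_rate_lt_one (s : ℝ) (hs : 0 < s) (h1 : s ≠ 1) :
    s * Real.exp (-(s ^ 2 - 1) / 2) < 1 := by
  have h2 : s ^ 2 - 1 ≠ 0 := by
    intro h
    have : (s - 1) * (s + 1) = 0 := by linarith
    rcases mul_eq_zero.1 this with h | h
    · exact h1 (by linarith)
    · linarith
  have h3 := Real.add_one_lt_exp h2
  have h4 : (s * Real.exp (-(s ^ 2 - 1) / 2)) ^ 2 < 1 := by
    rw [mul_pow, ← Real.exp_nat_mul]
    have : ((2 : ℕ) : ℝ) * (-(s ^ 2 - 1) / 2) = -(s ^ 2 - 1) := by push_cast; ring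
    rw [this, Real.exp_neg, ← div_eq_mul_inv, div_lt_one (Real.exp_pos _)]
    linarith
  exact lt_of_pow_lt_pow_left₀ 2 zero_le_one (by simpa using h4)

/-- The shell of radii between `(1 - δ) √N` and `(1 + δ) √N`. -/
def shell (N : ℕ) (δ : ℝ) : Set (Fin N → ℝ) :=
  (fun x => ∑ i, x i ^ 2) ⁻¹' Ioo ((1 - δ) ^ 2 * N) ((1 + δ) ^ 2 * N)

lemma measurableSet_shell (N : ℕ) (δ : ℝ) : MeasurableSet (shell N δ) :=
  measurableSet_preimage (by fun_prop) measurableSet_Ioo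

/-- For large `N`, at least half of the Gaussian mass of any integrable `0`-homogeneous weight lies
in the shell. This replaces the independence of the radius and the direction. -/
lemma lintegral_le_two_mul_shell (δ : ℝ) (hδ : 0 < δ) (hδ1 : δ < 1) :
    ∀ᶠ N : ℕ in atTop, ∀ h : (Fin N → ℝ) → ℝ≥0∞, Measurable h →
      (∀ (s : ℝ) x, 0 < s → h (s • x) = h x) →
      ∫⁻ x, h x ∂(Measure.pi fun _ : Fin N => gaussianReal 0 1) ≠ ⊤ →
      ∫⁻ x, h x ∂(Measure.pi fun _ : Fin N => gaussianReal 0 1) ≤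
        2 * ∫⁻ x in shell N δ, h x ∂(Measure.pi fun _ : Fin N => gaussianReal 0 1) := by
  have hq : ∀ s : ℝ, 0 < s → s ≠ 1 → Tendsto
      (fun N : ℕ => ENNReal.ofReal (s * Real.exp (-(s ^ 2 - 1) / 2)) ^ N) atTop (𝓝 0) := by
    intro s hs h1
    apply ENNReal.tendsto_pow_atTop_nhds_zero_of_lt_one
    rw [ENNReal.ofReal_lt_one]
    exact tail_rate_lt_one s hs h1
  have hlim := (hq (1 + δ) (by linarith) (by linarith)).add
    (hq (1 - δ) (by linarith) (by linarith))
  rw [add_zero] at hlim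
  have hev := hlim.eventually (gt_mem_nhds (show (0 : ℝ≥0∞) < 2⁻¹ by simp))
  filter_upwards [hev] with N hN h hm hh hfin
  set G := Measure.pi fun _ : Fin N => gaussianReal 0 1
  set I := ∫⁻ x, h x ∂G
  have t1 := lintegral_tail_le h hm (1 + δ) (by linarith) (fun x => hh _ x (by linarith))
  have t2 := lintegral_tail_le h hm (1 - δ) (by linarith) (fun x => hh _ x (by linarith))
  have hcov : (univ : Set (Fin N → ℝ)) ⊆ shell N δ ∪
      ({x | 0 ≤ (1 - 1 / (1 + δ) ^ 2) * (∑ i, x i ^ 2 - N * (1 + δ) ^ 2)} ∪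
      {x | 0 ≤ (1 - 1 / (1 - δ) ^ 2) * (∑ i, x i ^ 2 - N * (1 - δ) ^ 2)}) := by
    intro x _
    by_contra hx
    simp only [shell, mem_union, mem_preimage, mem_Ioo, mem_ofPred_eq, not_or, not_and, not_lt, not_le] at hx
    obtain ⟨ha, hb, hc⟩ := hx
    have e1 : 0 ≤ 1 - 1 / (1 + δ) ^ 2 := by
      rw [sub_nonneg, div_le_one (by positivity)]; nlinarith
    have e2 : 1 - 1 / (1 - δ) ^ 2 ≤ 0 := by
      rw [sub_nonpos, one_le_div (by nlinarith)]; nlinarith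
    have b1 : ∑ i, x i ^ 2 < N * (1 + δ) ^ 2 := by
      by_contra hcon; nlinarith [mul_nonneg e1 (sub_nonneg.2 (not_lt.1 hcon))]
    have b2 : N * (1 - δ) ^ 2 < ∑ i, x i ^ 2 := by
      by_contra hcon
      nlinarith [mul_nonneg (neg_nonneg.2 e2) (sub_nonneg.2 (not_lt.1 hcon))]
    have := ha (by linarith)
    linarith
  have key : I ≤ ∫⁻ x in shell N δ, h x ∂G + 2⁻¹ * I := by
    calc I = ∫⁻ x in univ, h x ∂G := by rw [Measure.restrict_univ]
      _ ≤ _ := lintegral_mono_set hcov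
      _ ≤ _ := lintegral_union_le _ _ _
      _ ≤ _ := by
          gcongr
          refine (lintegral_union_le _ _ _).trans ((add_le_add t1 t2).trans ?_)
          rw [← add_mul]
          gcongr
  have hhalf : I = 2⁻¹ * I + 2⁻¹ * I := by
    rw [← add_mul, ENNReal.inv_two_add_inv_two, one_mul]
  have hf2 : 2⁻¹ * I ≠ ⊤ := ENNReal.mul_ne_top (by simp) hfin
  have key2 : 2⁻¹ * I ≤ ∫⁻ x in shell N δ, h x ∂G := by
    exact (ENNReal.add_le_add_iff_right hf2).1 (hhalf.symm.le.trans key)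
  calc I = 2 * (2⁻¹ * I) := by
        rw [← mul_assoc, ENNReal.mul_inv_cancel (by simp) (by simp), one_mul]
    _ ≤ _ := by gcongr

/-! ### Radial projection -/

/-- Radial projection of `ℝ^N` onto the sphere of radius `√N` (it sends `0` to `0`). -/
def radProj (N : ℕ) (x : Fin N → ℝ) : Fin N → ℝ :=
  (Real.sqrt N / Real.sqrt (∑ i, x i ^ 2)) • x

lemma measurable_radProj (N : ℕ) : Measurable (radProj N) := by
  unfold radProj; fun_prop

lemma sigmaN_eq (N : ℕ) :
    sigmaN N = (Measure.pi fun _ : Fin N => gaussianReal 0 1).map (radProj N) := rfl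

lemma radProj_smul {N : ℕ} (s : ℝ) (hs : 0 < s) (x : Fin N → ℝ) :
    radProj N (s • x) = radProj N x := by
  unfold radProj
  have : ∑ i, (s • x) i ^ 2 = s ^ 2 * ∑ i, x i ^ 2 := by
    rw [Finset.mul_sum]; exact Finset.sum_congr rfl fun i _ => by simp [mul_pow]
  rw [this, Real.sqrt_mul (by positivity), Real.sqrt_sq hs.le, smul_smul]
  congr 1
  field_simp

lemma radProj_perm {N : ℕ} (π : Equiv.Perm (Fin N)) (x : Fin N → ℝ) :
    radProj N (fun i => x (π i)) = fun i => radProj N x (π i) := by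
  unfold radProj
  funext i
  simp [Equiv.sum_comp π (fun i => x i ^ 2)]

lemma sum_sq_radProj {N : ℕ} (x : Fin N → ℝ) (hx : ∑ i, x i ^ 2 ≠ 0) :
    ∑ i, radProj N x i ^ 2 = N := by
  have h0 : 0 ≤ ∑ i, x i ^ 2 := Finset.sum_nonneg fun i _ => sq_nonneg _
  simp only [radProj, Pi.smul_apply, smul_eq_mul, mul_pow]
  rw [← Finset.mul_sum, div_pow, Real.sq_sqrt h0, Real.sq_sqrt (Nat.cast_nonneg N)]
  field_simp

lemma map_perm_pi (m : Measure ℝ) [IsProbabilityMeasure m] {N : ℕ} (π : Equiv.Perm (Fin N)) :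
    (Measure.pi fun _ : Fin N => m).map (fun v i => v (π i)) = Measure.pi fun _ : Fin N => m := by
  refine (Measure.pi_eq fun s hs => ?_).symm
  rw [Measure.map_apply (by fun_prop) (MeasurableSet.univ_pi hs)]
  have : (fun (v : Fin N → ℝ) i => v (π i)) ⁻¹' (univ.pi s) = univ.pi fun i => s (π.symm i) := by
    ext v
    simp only [mem_preimage, Set.mem_pi, mem_univ, true_implies]
    exact ⟨fun h i => by simpa using h (π.symm i), fun h i => by simpa using h (π i)⟩
  rw [this, Measure.pi_pi]
  exact Equiv.prod_comp π.symm fun i => m (s i)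

lemma map_perm_radProj (m : Measure ℝ) [IsProbabilityMeasure m] {N : ℕ}
    (π : Equiv.Perm (Fin N)) :
    ((Measure.pi fun _ : Fin N => m).map (radProj N)).map (fun v i => v (π i)) =
      (Measure.pi fun _ : Fin N => m).map (radProj N) := by
  rw [Measure.map_map (by fun_prop) (measurable_radProj N)]
  nth_rewrite 2 [← map_perm_pi m π]
  rw [Measure.map_map (measurable_radProj N) (by fun_prop)]
  congr 1
  funext x
  exact (radProj_perm π x).symm

/-- A compactly supported continuous function varies little under dilations close to `1`. -/
lemma exists_dilation_bound (g : ℝ → ℝ) (hg : Continuous g) (hc : HasCompactSupport g) (ε : ℝ)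
    (hε : 0 < ε) :
    ∃ δ, 0 < δ ∧ δ < 1 ∧ ∀ r v : ℝ, 1 - δ < r → r < 1 + δ → |g (r * v) - g v| ≤ ε := by
  have huc := hc.uniformContinuous_of_continuous hg
  rw [Metric.uniformContinuous_iff] at huc
  obtain ⟨d, hd, hgd⟩ := huc ε hε
  obtain ⟨R, hR⟩ := hc.isCompact.isBounded.subset_closedBall (0 : ℝ)
  have hz : ∀ y, |R| < |y| → g y = 0 := fun y hy => by
    apply image_eq_zero_of_notMem_tsupport
    intro hmem
    have := hR hmem
    rw [mem_closedBall_zero_iff, Real.norm_eq_abs] at this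
    linarith [le_abs_self R]
  have hpos : 0 < 2 * |R| + 1 := by positivity
  refine ⟨min (1 / 2) (d / (2 * |R| + 1)), by positivity,
    (min_le_left _ _).trans_lt (by norm_num), fun r v h1 h2 => ?_⟩
  have hl := min_le_left (1 / 2) (d / (2 * |R| + 1))
  have hr := min_le_right (1 / 2) (d / (2 * |R| + 1))
  have hr1 : |r - 1| < d / (2 * |R| + 1) := by rw [abs_lt]; constructor <;> linarith
  by_cases hv : |v| ≤ 2 * |R|
  · have : dist (r * v) v < d := by
      rw [Real.dist_eq, show r * v - v = (r - 1) * v by ring, abs_mul]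
      rw [lt_div_iff₀ hpos] at hr1
      nlinarith [abs_nonneg (r - 1), abs_nonneg v]
    exact (hgd this).le
  · push Not at hv
    rw [hz v (by linarith [abs_nonneg R]), hz (r * v) ?_]
    · simpa using hε.le
    · rw [abs_mul, abs_of_pos (by linarith : 0 < r)]
      have : 1 / 2 * |v| ≤ r * |v| := mul_le_mul_of_nonneg_right (by linarith) (abs_nonneg v)
      linarith

/-- On the sphere, exponential moments of sums are bounded, to leading exponential order, by those of
the Gaussian product measure: on the thin shell `radProj` is a dilation by a factor close to `1`,
which barely affects `g`. -/
lemma integral_exp_sigmaN_le (g : ℝ → ℝ) (hg : Continuous g) (hc : HasCompactSupport g) (ε : ℝ)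
    (hε : 0 < ε) :
    ∀ᶠ N : ℕ in atTop, ∫ v, Real.exp (∑ i, g (v i)) ∂(sigmaN N) ≤
      2 * (Real.exp (N * ε) * (∫ v, Real.exp (g v) ∂(gaussianReal 0 1)) ^ N) := by
  obtain ⟨δ, hδ, hδ1, hgδ⟩ := exists_dilation_bound g hg hc ε hε
  obtain ⟨C, hC⟩ := hc.exists_bound_of_continuous hg
  filter_upwards [lintegral_le_two_mul_shell δ hδ hδ1] with N hN
  have hgm := hg.measurable
  have hrm := measurable_radProj N
  have hrmi : ∀ i, Measurable fun x : Fin N → ℝ => radProj N x i := fun i =>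
    (measurable_pi_apply i).comp hrm
  set G := Measure.pi fun _ : Fin N => gaussianReal 0 1 with hG
  have hbd : ∀ v : Fin N → ℝ, Real.exp (∑ i, g (v i)) ≤ Real.exp (N * C) := by
    intro v
    rw [Real.exp_le_exp]
    calc ∑ i, g (v i) ≤ ∑ _i : Fin N, C :=
          Finset.sum_le_sum fun i _ => (le_abs_self _).trans (hC _)
      _ = N * C := by simp
  have hhm : Measurable fun x : Fin N → ℝ => ENNReal.ofReal (Real.exp (∑ i, g (radProj N x i))) := by
    fun_prop
  have hfin : ∫⁻ x, ENNReal.ofReal (Real.exp (∑ i, g (radProj N x i))) ∂G ≠ ⊤ := by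
    refine ne_top_of_le_ne_top (b := ∫⁻ _, ENNReal.ofReal (Real.exp (N * C)) ∂G) (by simp) ?_
    exact lintegral_mono fun x => ENNReal.ofReal_le_ofReal (hbd _)
  have h1 := hN _ hhm (fun s x hs => by rw [radProj_smul s hs]) hfin
  have h2 : ∫⁻ x in shell N δ, ENNReal.ofReal (Real.exp (∑ i, g (radProj N x i))) ∂G ≤
      ∫⁻ x, ENNReal.ofReal (Real.exp (N * ε) * ∏ i, Real.exp (g (x i))) ∂G := by
    refine (setLIntegral_mono' (measurableSet_shell N δ) fun x hx => ?_).trans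
      (setLIntegral_le_lintegral _ _)
    apply ENNReal.ofReal_le_ofReal
    rw [← Real.exp_sum, ← Real.exp_add, Real.exp_le_exp]
    simp only [shell, mem_preimage, mem_Ioo] at hx
    have hNpos : (0 : ℝ) < N := by
      rcases Nat.eq_zero_or_pos N with h | h
      · subst h; simp at hx
      · exact_mod_cast h
    have hsN := Real.sqrt_pos.2 hNpos
    have hS : 0 < ∑ i, x i ^ 2 := lt_of_le_of_lt (by positivity) hx.1
    have hsS := Real.sqrt_pos.2 hS
    set r := Real.sqrt (∑ i, x i ^ 2) / Real.sqrt N with hr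
    have hr1 : 1 - δ < r := by
      rw [hr, lt_div_iff₀ hsN]
      apply Real.lt_sqrt_of_sq_lt
      rw [mul_pow, Real.sq_sqrt hNpos.le]; exact hx.1
    have hr2 : r < 1 + δ := by
      rw [hr, div_lt_iff₀ hsN, Real.sqrt_lt' (by positivity), mul_pow, Real.sq_sqrt hNpos.le]
      exact hx.2
    have hxi : ∀ i, x i = r * radProj N x i := fun i => by
      simp only [radProj, Pi.smul_apply, smul_eq_mul, hr]
      field_simp
    calc ∑ i, g (radProj N x i) ≤ ∑ i, (ε + g (x i)) := by
          refine Finset.sum_le_sum fun i _ => ?_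
          have := hgδ r (radProj N x i) hr1 hr2
          rw [← hxi i] at this
          linarith [(abs_le.1 this).1]
      _ = _ := by rw [Finset.sum_add_distrib]; simp
  have hint : Integrable (fun x : Fin N → ℝ => Real.exp (N * ε) * ∏ i, Real.exp (g (x i))) G := by
    refine Integrable.of_bound (Measurable.aestronglyMeasurable (by fun_prop))
      (Real.exp (N * ε) * Real.exp (N * C)) (ae_of_all _ fun x => ?_)
    rw [Real.norm_of_nonneg (by positivity), ← Real.exp_sum]
    exact mul_le_mul_of_nonneg_left (hbd x) (Real.exp_pos _).le
  have h3 : ∫⁻ x, ENNReal.ofReal (Real.exp (N * ε) * ∏ i, Real.exp (g (x i))) ∂G =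
      ENNReal.ofReal (Real.exp (N * ε) * (∫ v, Real.exp (g v) ∂(gaussianReal 0 1)) ^ N) := by
    rw [← ofReal_integral_eq_lintegral_ofReal hint (ae_of_all _ fun x => by positivity),
      integral_const_mul, hG,
      integral_fintype_prod_eq_pow (ι := Fin N) (fun v : ℝ => Real.exp (g v)), Fintype.card_fin]
  have hnn : 0 ≤ Real.exp (N * ε) * (∫ v, Real.exp (g v) ∂(gaussianReal 0 1)) ^ N :=
    mul_nonneg (Real.exp_pos _).le (pow_nonneg (integral_nonneg fun _ => (Real.exp_pos _).le) _)
  rw [sigmaN_eq, integral_map hrm.aemeasurable (Measurable.aestronglyMeasurable (by fun_prop)),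
    integral_eq_lintegral_of_nonneg_ae (ae_of_all _ fun _ => (Real.exp_pos _).le)
      (Measurable.aestronglyMeasurable (by fun_prop))]
  refine ENNReal.toReal_le_of_le_ofReal (by positivity) (h1.trans ?_)
  rw [ENNReal.ofReal_mul (by norm_num), ← h3, ENNReal.ofReal_ofNat]
  gcongr

/-! ### Convergence of marginals -/

lemma measurable_projFun (N k : ℕ) : Measurable (projFun N k) := by
  refine measurable_pi_lambda _ fun i => ?_
  unfold projFun
  by_cases h : (i : ℕ) < N
  · simp only [h, dif_pos]; fun_prop
  · simp only [h, dif_neg, not_false_eq_true]; fun_prop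

/-- Chaoticity of the projected product measures: by the strong law of large numbers the radial
projection of an i.i.d. sequence is almost surely asymptotically trivial on each coordinate. -/
lemma tendsto_marginal (m : Measure ℝ) [IsProbabilityMeasure m]
    (hi : Integrable (fun v => v ^ 2) m) (h1 : ∫ v, v ^ 2 ∂m = 1) (k : ℕ)
    (φ : BoundedContinuousFunction (Fin k → ℝ) ℝ) :
    Tendsto (fun N => ∫ x, φ x
        ∂(marginal N k ((Measure.pi fun _ : Fin N => m).map (radProj N)))) atTop
      (𝓝 (∫ x, φ x ∂(Measure.pi fun _ : Fin k => m))) := by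
  set P := Measure.infinitePi (fun _ : ℕ => m) with hP
  have hindep : iIndepFun (fun (i : ℕ) (ω : ℕ → ℝ) => ω i) P :=
    iIndepFun_infinitePi (X := fun _ => id) fun _ => measurable_id
  have hmap : ∀ N : ℕ, P.map (fun ω (i : Fin N) => ω i) = Measure.pi fun _ : Fin N => m := by
    intro N
    have h := hindep.precomp (g := fun i : Fin N => (i : ℕ)) Fin.val_injective
    have hae : ∀ i : Fin N, AEMeasurable (fun ω : ℕ → ℝ => ω (i : ℕ)) P :=
      fun i => (measurable_pi_apply (i : ℕ)).aemeasurable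
    have h' := (iIndepFun_iff_map_fun_eq_pi_map hae).1 h
    simp_rw [hP, Measure.infinitePi_map_eval] at h'
    exact h'
  have hproj : ∀ N, Measurable (projFun N k) := fun N => measurable_projFun N k
  have hrestr : ∀ N : ℕ, Measurable (fun (ω : ℕ → ℝ) (i : Fin N) => ω i) := fun N => by fun_prop
  have hL : ∀ N, ∫ x, φ x ∂(marginal N k ((Measure.pi fun _ : Fin N => m).map (radProj N))) =
      ∫ ω, φ (projFun N k (radProj N fun i => ω i)) ∂P := by
    intro N
    have hr := measurable_radProj N
    rw [marginal, ← hmap, Measure.map_map hr (hrestr N),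
      Measure.map_map (hproj N) (hr.comp (hrestr N)),
      integral_map ((hproj N).comp (hr.comp (hrestr N))).aemeasurable
        φ.continuous.aestronglyMeasurable]
    rfl
  have hR : ∫ x, φ x ∂(Measure.pi fun _ : Fin k => m) = ∫ ω, φ (fun i => ω i) ∂P := by
    rw [← hmap, integral_map (hrestr k).aemeasurable φ.continuous.aestronglyMeasurable]
  simp_rw [hL, hR]
  have hev : ∀ i : ℕ, MeasurePreserving (fun ω : ℕ → ℝ => ω i) P m :=
    fun i => measurePreserving_eval_infinitePi (fun _ : ℕ => m) i
  have hslln : ∀ᵐ ω ∂P, Tendsto (fun n : ℕ => (∑ i ∈ Finset.range n, ω i ^ 2) / (n : ℝ)) atTop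
      (𝓝 (1 : ℝ)) := by
    have h := strong_law_ae_real (μ := P) (fun (i : ℕ) (ω : ℕ → ℝ) => ω i ^ 2)
      ((hev 0).integrable_comp_of_integrable hi)
      (fun i j hij => by
        exact (hindep.indepFun hij).comp (φ := fun x => x ^ 2) (ψ := fun x => x ^ 2)
          (by fun_prop) (by fun_prop))
      (fun i => by
        have : IdentDistrib (fun ω : ℕ → ℝ => ω i) (fun ω : ℕ → ℝ => ω 0) P P :=
          ⟨(hev i).measurable.aemeasurable, (hev 0).measurable.aemeasurable, by
            rw [(hev i).map_eq, (hev 0).map_eq]⟩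
        exact this.comp (u := fun x => x ^ 2) (by fun_prop))
    have h0 : ∫ ω, (ω 0) ^ 2 ∂P = 1 := by
      rw [← h1, ← (hev 0).map_eq, integral_map (hev 0).measurable.aemeasurable]
      exact Measurable.aestronglyMeasurable (by fun_prop)
    rw [h0] at h
    exact h
  refine tendsto_integral_of_dominated_convergence (fun _ => ‖φ‖) (fun N => ?_)
    (integrable_const _) (fun N => ae_of_all _ fun ω => φ.norm_coe_le_norm _) ?_
  · exact (φ.continuous.measurable.comp ((hproj N).comp
      ((measurable_radProj N).comp (hrestr N)))).aestronglyMeasurable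
  filter_upwards [hslln] with ω hω
  refine (φ.continuous.tendsto _).comp (tendsto_pi_nhds.2 fun j => ?_)
  have hs : Tendsto (fun n : ℕ => (Real.sqrt ((∑ i ∈ Finset.range n, ω i ^ 2) / (n : ℝ)))⁻¹ * ω j) atTop
      (𝓝 (ω j)) := by
    have := ((hω.sqrt).inv₀ (by simp)).mul_const (ω j)
    simpa using this
  refine hs.congr' ?_
  filter_upwards [eventually_ge_atTop k] with N hN
  have hj : (j : ℕ) < N := j.2.trans_le hN
  simp only [projFun, hj, dif_pos, radProj, Pi.smul_apply, smul_eq_mul]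
  rw [Real.sqrt_div (Finset.sum_nonneg fun i _ => sq_nonneg _), inv_div,
    Finset.sum_range fun i => ω i ^ 2]

/-! ### Variational approximation of the one-particle entropy -/

/-- Truncation of a real number to `[-M, M]`. -/
def clamp (M y : ℝ) : ℝ := max (-M) (min M y)

lemma clamp_le {M : ℝ} (hM : 0 ≤ M) (y : ℝ) : clamp M y ≤ M :=
  max_le (by linarith) (min_le_left _ _)

lemma neg_le_clamp (M y : ℝ) : -M ≤ clamp M y := le_max_left _ _

lemma abs_clamp_le {M : ℝ} (hM : 0 ≤ M) (y : ℝ) : |clamp M y| ≤ M :=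
  abs_le.2 ⟨neg_le_clamp M y, clamp_le hM y⟩

lemma abs_clamp_sub_clamp_le (M y z : ℝ) : |clamp M y - clamp M z| ≤ |y - z| := by
  unfold clamp
  refine (abs_max_sub_max_le_max _ _ _ _).trans ?_
  rw [sub_self, abs_zero]
  refine max_le (abs_nonneg _) ((abs_min_sub_min_le_max _ _ _ _).trans ?_)
  rw [sub_self, abs_zero]
  exact max_le (abs_nonneg _) le_rfl

lemma clamp_zero {M : ℝ} (hM : 0 ≤ M) : clamp M 0 = 0 := by
  rw [clamp, min_eq_right hM, max_eq_right (by linarith)]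

lemma abs_clamp_le_abs {M : ℝ} (hM : 0 ≤ M) (y : ℝ) : |clamp M y| ≤ |y| := by
  have := abs_clamp_sub_clamp_le M y 0
  rwa [clamp_zero hM, sub_zero, sub_zero] at this

lemma clamp_of_abs_le {M y : ℝ} (h : |y| ≤ M) : clamp M y = y := by
  rw [clamp, min_eq_right (le_of_abs_le h), max_eq_right (neg_le_of_abs_le h)]

lemma exp_sub_exp_le {M a b : ℝ} (ha : a ≤ M) :
    Real.exp a - Real.exp b ≤ Real.exp M * |b - a| := by
  have h1 := Real.add_one_le_exp (b - a)
  have h2 : Real.exp b = Real.exp a * Real.exp (b - a) := by rw [← Real.exp_add]; ring_nf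
  have h3 : Real.exp a ≤ Real.exp M := Real.exp_le_exp.2 ha
  have h4 : Real.exp a - Real.exp b ≤ Real.exp a * (a - b) := by
    rw [h2]; nlinarith [Real.exp_pos a]
  have h5 : a - b ≤ |b - a| := by rw [abs_sub_comm]; exact le_abs_self _
  exact h4.trans ((mul_le_mul_of_nonneg_left h5 (Real.exp_pos a).le).trans
    (mul_le_mul_of_nonneg_right h3 (abs_nonneg _)))

/-- Compactly supported continuous functions almost attain the supremum in the variational formula
for the relative entropy: truncate the log-likelihood ratio at height `M`, then approximate it in
`L¹(m + ν)` by such a function. -/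
lemma exists_test_function (m ν : Measure ℝ) [IsProbabilityMeasure m] [IsProbabilityMeasure ν]
    (hac : m ≪ ν) (hint : Integrable (llr m ν) m) (ε : ℝ) (hε : 0 < ε) :
    ∃ g : ℝ → ℝ, Continuous g ∧ HasCompactSupport g ∧
      ∫ v, llr m ν v ∂m - ε ≤ ∫ v, g v ∂m - Real.log (∫ v, Real.exp (g v) ∂ν) := by
  set p : ℝ → ℝ := fun x => (m.rnDeriv ν x).toReal with hp
  have hpm : Measurable p := (Measure.measurable_rnDeriv m ν).ennreal_toReal
  have hp0 : ∀ x, 0 ≤ p x := fun x => ENNReal.toReal_nonneg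
  -- where the density vanishes, `Real.log` has the junk value `0`: take `-M` there instead
  set u : ℝ → ℝ → ℝ := fun M x => if p x = 0 then -M else clamp M (Real.log (p x)) with hu
  have hclm : ∀ M, Measurable (clamp M) := fun M => by unfold clamp; fun_prop
  have hum : ∀ M, Measurable (u M) := fun M =>
    Measurable.ite (hpm (measurableSet_singleton 0)) measurable_const
      ((hclm M).comp (Real.measurable_log.comp hpm))
  have hpos : ∀ᵐ x ∂m, p x ≠ 0 := by
    filter_upwards [Measure.rnDeriv_pos hac, hac.ae_le (Measure.rnDeriv_lt_top m ν)] with x h1 h2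
    exact (ENNReal.toReal_pos h1.ne' h2.ne).ne'
  have hub : ∀ M, 0 ≤ M → ∀ x, |u M x| ≤ M := by
    intro M hM x
    simp only [hu]
    split_ifs
    · rw [abs_neg, abs_of_nonneg hM]
    · exact abs_clamp_le hM _
  have hlim : Tendsto (fun M : ℕ => ∫ x, u M x ∂m) atTop (𝓝 (∫ x, llr m ν x ∂m)) := by
    refine tendsto_integral_of_dominated_convergence (fun x => |llr m ν x|)
      (fun M => (hum M).aestronglyMeasurable) hint.abs (fun M => ?_) ?_
    · filter_upwards [hpos] with x hx
      simp only [hu, hx, if_false, Real.norm_eq_abs]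
      exact abs_clamp_le_abs (Nat.cast_nonneg M) _
    · filter_upwards [hpos] with x hx
      refine tendsto_const_nhds.congr' ?_
      obtain ⟨K, hK⟩ := exists_nat_ge |Real.log (p x)|
      filter_upwards [eventually_ge_atTop K] with M hM
      simp only [hu, hx, if_false]
      rw [clamp_of_abs_le (hK.trans (by exact_mod_cast hM))]
      rfl
  have hexp : Tendsto (fun M : ℕ => Real.exp (-(M : ℝ))) atTop (𝓝 0) :=
    Real.tendsto_exp_neg_atTop_nhds_zero.comp tendsto_natCast_atTop_atTop
  have e1 := hlim.eventually (lt_mem_nhds (sub_lt_self _ (half_pos hε)))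
  have e2 := hexp.eventually (gt_mem_nhds (show (0 : ℝ) < ε / 6 by positivity))
  obtain ⟨M, hM1, hM2⟩ := (e1.and e2).exists
  have hM : (0 : ℝ) ≤ M := Nat.cast_nonneg M
  set E := Real.exp (-(M : ℝ)) with hE
  have hE0 : 0 < E := Real.exp_pos _
  have hE1 : E ≤ 1 := Real.exp_le_one_iff.2 (by linarith)
  have hEM : Real.exp M * (E * E) = E := by
    rw [← mul_assoc, hE, ← Real.exp_add]; simp
  have huint : ∀ (ρ : Measure ℝ) [IsFiniteMeasure ρ], Integrable (u M) ρ := fun ρ _ =>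
    Integrable.of_bound (hum M).aestronglyMeasurable M (ae_of_all _ (hub M hM))
  -- the exponential is `exp M`-Lipschitz below `M`, and an error `E * E = exp (-2 * M)` absorbs this
  obtain ⟨g0, hg0c, hg0, hg0cont, hg0i⟩ :=
    (huint (m + ν)).exists_hasCompactSupport_integral_sub_le (mul_pos hE0 hE0)
  have hg0m : Integrable g0 m := hg0i.mono_measure (Measure.le_add_right le_rfl)
  have hg0ν : Integrable g0 ν := hg0i.mono_measure (Measure.le_add_left le_rfl)
  have hdm : Integrable (fun x => ‖u M x - g0 x‖) m := ((huint m).sub hg0m).norm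
  have hdν : Integrable (fun x => ‖u M x - g0 x‖) ν := ((huint ν).sub hg0ν).norm
  rw [integral_add_measure hdm hdν] at hg0
  have nnm : 0 ≤ ∫ x, ‖u M x - g0 x‖ ∂m := integral_nonneg fun _ => norm_nonneg _
  have nnν : 0 ≤ ∫ x, ‖u M x - g0 x‖ ∂ν := integral_nonneg fun _ => norm_nonneg _
  have hclu : ∀ x, clamp M (u M x) = u M x := fun x => clamp_of_abs_le (hub M hM x)
  have hdiff : ∀ x, |u M x - clamp M (g0 x)| ≤ ‖u M x - g0 x‖ := fun x => by
    have := abs_clamp_sub_clamp_le M (u M x) (g0 x)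
    rwa [hclu] at this
  have hgc : Continuous fun x => clamp M (g0 x) := by unfold clamp; fun_prop
  have hgint : ∀ (ρ : Measure ℝ) [IsFiniteMeasure ρ], Integrable (fun x => clamp M (g0 x)) ρ :=
    fun ρ _ => Integrable.of_bound hgc.aestronglyMeasurable M
      (ae_of_all _ fun x => abs_clamp_le hM _)
  refine ⟨fun x => clamp M (g0 x), hgc, hg0c.comp_left (clamp_zero hM), ?_⟩
  have k1 : ∫ x, u M x ∂m - E * E ≤ ∫ x, clamp M (g0 x) ∂m := by
    have : ∫ x, (u M x - clamp M (g0 x)) ∂m ≤ ∫ x, ‖u M x - g0 x‖ ∂m :=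
      integral_mono ((huint m).sub (hgint m)) hdm fun x => (le_abs_self _).trans (hdiff x)
    rw [integral_sub (huint m) (hgint m)] at this
    linarith
  have hpi : Integrable p ν := Measure.integrable_toReal_rnDeriv
  have hp1 : ∫ x, p x ∂ν = 1 := by
    rw [hp, Measure.integral_toReal_rnDeriv hac]; simp
  have k2 : ∫ x, Real.exp (clamp M (g0 x)) ∂ν ≤ 1 + E + E := by
    have hpt : ∀ x, Real.exp (clamp M (g0 x)) ≤ p x + E + Real.exp M * ‖u M x - g0 x‖ := by
      intro x
      have a1 : Real.exp (u M x) ≤ p x + E := by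
        by_cases hx : p x = 0
        · simp only [hu, hx, if_true, zero_add]; exact le_rfl
        · simp only [hu, hx, if_false]
          have hpx : 0 < p x := lt_of_le_of_ne (hp0 x) (Ne.symm hx)
          rcases max_choice (-(M : ℝ)) (min M (Real.log (p x))) with h | h
          · rw [clamp, h]; linarith
          · rw [clamp, h]
            have : Real.exp (min M (Real.log (p x))) ≤ p x := by
              rw [← Real.exp_log hpx, Real.log_exp]
              exact Real.exp_le_exp.2 (min_le_right _ _)
            linarith
      have a2 := exp_sub_exp_le (b := u M x) (clamp_le hM (g0 x))
      have a3 := mul_le_mul_of_nonneg_left (hdiff x) (Real.exp_pos (M : ℝ)).le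
      linarith
    have hpE : Integrable (fun x => p x + E) ν := hpi.add (integrable_const E)
    calc ∫ x, Real.exp (clamp M (g0 x)) ∂ν
        ≤ ∫ x, (p x + E + Real.exp M * ‖u M x - g0 x‖) ∂ν := by
          refine integral_mono ?_ (hpE.add (hdν.const_mul _)) hpt
          refine Integrable.of_bound (Real.continuous_exp.comp hgc).aestronglyMeasurable
            (Real.exp M) (ae_of_all _ fun x => ?_)
          rw [Real.norm_of_nonneg (Real.exp_pos _).le]
          exact Real.exp_le_exp.2 (clamp_le hM _)
      _ = 1 + E + Real.exp M * ∫ x, ‖u M x - g0 x‖ ∂ν := by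
          rw [integral_add hpE (hdν.const_mul _),
            integral_add hpi (integrable_const E), integral_const_mul, hp1]
          simp
      _ ≤ 1 + E + Real.exp M * (E * E) := by gcongr; linarith
      _ = _ := by rw [hEM]
  have k3 : Real.log (∫ x, Real.exp (clamp M (g0 x)) ∂ν) ≤ E + E := by
    have hipos : 0 < ∫ x, Real.exp (clamp M (g0 x)) ∂ν := by
      apply integral_exp_pos
      refine Integrable.of_bound (Real.continuous_exp.comp hgc).aestronglyMeasurable
        (Real.exp M) (ae_of_all _ fun x => ?_)
      rw [Real.norm_of_nonneg (Real.exp_pos _).le]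
      exact Real.exp_le_exp.2 (clamp_le hM _)
    linarith [Real.log_le_sub_one_of_pos hipos]
  have k4 : E * E ≤ E := mul_le_of_le_one_left hE0.le hE1
  linarith

/-! ### The projected product measure -/

lemma isProbabilityMeasure_densityMeasure (f : ℝ → ℝ) (hnn : ∀ v, 0 ≤ f v)
    (hint : ∫ v, f v = 1) : IsProbabilityMeasure (densityMeasure f) := by
  have hi : Integrable f := by
    by_contra h
    rw [integral_undef h] at hint
    exact zero_ne_one hint
  constructor
  rw [densityMeasure, withDensity_apply _ MeasurableSet.univ, setLIntegral_univ,
    ← ofReal_integral_eq_lintegral_ofReal hi (ae_of_all _ hnn), hint, ENNReal.ofReal_one]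

lemma integrable_sq_densityMeasure (f : ℝ → ℝ) (hmeas : Measurable f) (hnn : ∀ v, 0 ≤ f v)
    (h2i : Integrable fun v => v ^ 2 * f v) :
    Integrable (fun v => v ^ 2) (densityMeasure f) := by
  rw [densityMeasure, integrable_withDensity_iff hmeas.ennreal_ofReal
    (ae_of_all _ fun _ => ENNReal.ofReal_lt_top)]
  simpa only [ENNReal.toReal_ofReal (hnn _)] using h2i

lemma integral_sq_densityMeasure (f : ℝ → ℝ) (hmeas : Measurable f) (hnn : ∀ v, 0 ≤ f v)
    (h2 : ∫ v, v ^ 2 * f v = 1) : ∫ v, v ^ 2 ∂(densityMeasure f) = 1 := by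
  rw [densityMeasure, integral_withDensity_eq_integral_toReal_smul hmeas.ennreal_ofReal
    (ae_of_all _ fun _ => ENNReal.ofReal_lt_top), ← h2]
  refine integral_congr_ae (ae_of_all _ fun v => ?_)
  simp only [ENNReal.toReal_ofReal (hnn _), smul_eq_mul, mul_comm]

/-- The projected measure lives on the sphere: the only point where the projection fails to land
there is the origin, which is null because `m` has no atoms. -/
lemma map_radProj_sphere (m : Measure ℝ) [IsProbabilityMeasure m]
    (hac : m ≪ gaussianReal 0 1) (N : ℕ) :
    (Measure.pi fun _ : Fin N => m).map (radProj N) {v | ∑ i, v i ^ 2 ≠ (N : ℝ)} = 0 := by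
  have hs : MeasurableSet {v : Fin N → ℝ | ∑ i, v i ^ 2 ≠ (N : ℝ)} :=
    (measurableSet_eq_fun (by fun_prop) measurable_const).compl
  rw [Measure.map_apply (measurable_radProj N) hs]
  rcases Nat.eq_zero_or_pos N with rfl | hN
  · simp
  have h0 : m {0} = 0 := hac ((nullSingletonClass_gaussianReal one_ne_zero).measure_singleton 0)
  have hev := (measurePreserving_eval (fun _ : Fin N => m) ⟨0, hN⟩).measure_preimage
    (measurableSet_singleton (0 : ℝ)).nullMeasurableSet
  rw [h0] at hev
  refine measure_mono_null (fun x hx => ?_) hev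
  by_contra hx0
  refine hx (sum_sq_radProj x fun hsum => hx0 ?_)
  have := (Finset.sum_eq_zero_iff_of_nonneg fun i _ => sq_nonneg (x i)).1 hsum ⟨0, hN⟩
    (Finset.mem_univ _)
  exact pow_eq_zero_iff two_ne_zero |>.1 this

lemma integral_sum_map_radProj (m : Measure ℝ) [IsProbabilityMeasure m] (g : ℝ → ℝ)
    (hg : Continuous g) (hi : ∀ N (i : Fin N), Integrable (fun v : Fin N → ℝ => g (v i))
      ((Measure.pi fun _ : Fin N => m).map (radProj N))) (N : ℕ) (hN : 0 < N) :
    ∫ v, ∑ i, g (v i) ∂((Measure.pi fun _ : Fin N => m).map (radProj N)) =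
      N * ∫ x : Fin 1 → ℝ, g (x 0)
        ∂(marginal N 1 ((Measure.pi fun _ : Fin N => m).map (radProj N))) := by
  have hgc : ∀ (n : ℕ) (i : Fin n), Continuous fun v : Fin n → ℝ => g (v i) :=
    fun _ i => hg.comp (continuous_apply i)
  have hpm := measurable_projFun N 1
  have h1 : ∫ x : Fin 1 → ℝ, g (x 0)
      ∂(marginal N 1 ((Measure.pi fun _ : Fin N => m).map (radProj N))) =
      ∫ v, g (v ⟨0, hN⟩) ∂((Measure.pi fun _ : Fin N => m).map (radProj N)) := by
    rw [marginal, integral_map hpm.aemeasurable (hgc 1 0).aestronglyMeasurable]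
    simp [projFun, hN]
  have h2 : ∀ i : Fin N, ∫ v, g (v i) ∂((Measure.pi fun _ : Fin N => m).map (radProj N)) =
      ∫ v, g (v ⟨0, hN⟩) ∂((Measure.pi fun _ : Fin N => m).map (radProj N)) := by
    intro i
    have hswap : Measurable fun (v : Fin N → ℝ) j => v (Equiv.swap i ⟨0, hN⟩ j) := by fun_prop
    conv_lhs => rw [← map_perm_radProj m (Equiv.swap i ⟨0, hN⟩)]
    rw [integral_map hswap.aemeasurable (hgc N i).aestronglyMeasurable]
    simp only [Equiv.swap_apply_left]
  rw [integral_finsetSum _ fun i _ => hi N i, h1, Finset.sum_congr rfl fun i _ => h2 i]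
  simp

/-! ### The specific entropy -/

/-- The upper bound on the specific entropy: both measures are images of product measures under the
radial projection, so the data processing inequality applies. -/
lemma klDiv_radProj_le (m : Measure ℝ) [IsProbabilityMeasure m] (hac : m ≪ gaussianReal 0 1)
    (hint : Integrable (llr m (gaussianReal 0 1)) m) (N : ℕ) :
    InformationTheory.klDiv ((Measure.pi fun _ : Fin N => m).map (radProj N)) (sigmaN N) ≤
      ENNReal.ofReal (N * ∫ v, llr m (gaussianReal 0 1) v ∂m) := by
  rw [sigmaN_eq, ← klDiv_pi m _ hac hint N]
  exact InformationTheory.klDiv_map_le _ _ (measurable_radProj N)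

/-- The lower bound on the specific entropy: test the variational formula on `∑ i, g (v i)`, with
`g` nearly optimal for the one-particle entropy. -/
lemma eventually_le_klDiv (m : Measure ℝ) [IsProbabilityMeasure m] (hac : m ≪ gaussianReal 0 1)
    (hint : Integrable (llr m (gaussianReal 0 1)) m)
    (hi : Integrable (fun v => v ^ 2) m) (h1 : ∫ v, v ^ 2 ∂m = 1) (ε : ℝ) (hε : 0 < ε) :
    ∀ᶠ N : ℕ in atTop, ∫ v, llr m (gaussianReal 0 1) v ∂m - ε ≤
      (InformationTheory.klDiv ((Measure.pi fun _ : Fin N => m).map (radProj N))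
        (sigmaN N)).toReal / N := by
  obtain ⟨g, hg, hc, hgm⟩ := exists_test_function m (gaussianReal 0 1) hac hint (ε / 4)
    (by positivity)
  obtain ⟨C, hC⟩ := hc.exists_bound_of_continuous hg
  set φ : BoundedContinuousFunction (Fin 1 → ℝ) ℝ :=
    BoundedContinuousFunction.ofNormedAddCommGroup (fun x => g (x 0))
      (hg.comp (continuous_apply 0)) C fun x => hC _ with hφ
  have hmarg := tendsto_marginal m hi h1 1 φ
  have hlim : ∫ x, φ x ∂(Measure.pi fun _ : Fin 1 => m) = ∫ v, g v ∂m :=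
    integral_comp_eval m (0 : Fin 1) (Integrable.of_bound hg.aestronglyMeasurable C
      (ae_of_all _ hC))
  rw [hlim] at hmarg
  have hlog : Tendsto (fun N : ℕ => Real.log 2 / (N : ℝ)) atTop (𝓝 0) :=
    tendsto_const_div_atTop_nhds_zero_nat _
  have e1 := hmarg.eventually (lt_mem_nhds (sub_lt_self _ (show 0 < ε / 4 by positivity)))
  have e2 := hlog.eventually (gt_mem_nhds (show 0 < ε / 4 by positivity))
  filter_upwards [e1, e2, integral_exp_sigmaN_le g hg hc (ε / 4) (by positivity),
    eventually_gt_atTop 0] with N hN1 hN2 hN3 hN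
  set μ := (Measure.pi fun _ : Fin N => m).map (radProj N) with hμ
  have : IsProbabilityMeasure μ :=
    Measure.isProbabilityMeasure_map (measurable_radProj N).aemeasurable
  have : IsProbabilityMeasure (sigmaN N) := by
    rw [sigmaN_eq]; exact Measure.isProbabilityMeasure_map (measurable_radProj N).aemeasurable
  have hfin : InformationTheory.klDiv μ (sigmaN N) ≠ ⊤ :=
    ((klDiv_radProj_le m hac hint N).trans_lt ENNReal.ofReal_lt_top).ne
  obtain ⟨hμac, hμint⟩ := InformationTheory.klDiv_ne_top_iff.1 hfin
  have hgi : ∀ N (i : Fin N), Integrable (fun v : Fin N → ℝ => g (v i))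
      ((Measure.pi fun _ : Fin N => m).map (radProj N)) := fun N i => by
    have : IsProbabilityMeasure ((Measure.pi fun _ : Fin N => m).map (radProj N)) :=
      Measure.isProbabilityMeasure_map (measurable_radProj N).aemeasurable
    exact Integrable.of_bound (hg.comp (continuous_apply i)).aestronglyMeasurable C
      (ae_of_all _ fun v => hC _)
  have hΦc : Continuous fun v : Fin N → ℝ => ∑ i, g (v i) := by fun_prop
  have hei : Integrable (fun v : Fin N → ℝ => Real.exp (∑ i, g (v i))) (sigmaN N) := by
    refine Integrable.of_bound (Real.continuous_exp.comp hΦc).aestronglyMeasurable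
      (Real.exp (∑ _i : Fin N, C)) (ae_of_all _ fun v => ?_)
    rw [Real.norm_of_nonneg (Real.exp_pos _).le]
    exact Real.exp_le_exp.2 (Finset.sum_le_sum fun i _ => (le_abs_self _).trans (hC _))
  have hDV := integral_sub_log_le μ (sigmaN N) hμac hμint (fun v => ∑ i, g (v i))
    (integrable_finsetSum _ fun i _ => hgi N i) hei
  rw [integral_sum_map_radProj m g hg hgi N hN] at hDV
  have hIpos : 0 < ∫ v, Real.exp (g v) ∂(gaussianReal 0 1) := by
    apply integral_exp_pos
    refine Integrable.of_bound (Real.continuous_exp.comp hg).aestronglyMeasurable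
      (Real.exp C) (ae_of_all _ fun v => ?_)
    rw [Real.norm_of_nonneg (Real.exp_pos _).le]
    exact Real.exp_le_exp.2 ((le_abs_self _).trans (hC _))
  have hlogle := Real.log_le_log (integral_exp_pos hei) hN3
  rw [Real.log_mul two_ne_zero (by positivity), Real.log_mul (Real.exp_pos _).ne' (by positivity),
    Real.log_exp, Real.log_pow] at hlogle
  have hNp : (0 : ℝ) < N := by exact_mod_cast hN
  rw [div_lt_iff₀ hNp] at hN2
  rw [le_div_iff₀ hNp]
  have hN1' : ∫ v, g v ∂m - ε / 4 ≤ ∫ x : Fin 1 → ℝ, g (x 0) ∂(marginal N 1 μ) := hN1.le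
  have s1 := mul_le_mul_of_nonneg_left hN1' hNp.le
  have s2 := mul_le_mul_of_nonneg_left hgm hNp.le
  linarith

lemma tendsto_relEntropy (m : Measure ℝ) [IsProbabilityMeasure m]
    (hi : Integrable (fun v => v ^ 2) m) (h1 : ∫ v, v ^ 2 ∂m = 1)
    (hH : relEntropy m (gaussianReal 0 1) < ⊤) :
    Tendsto (fun N : ℕ => relEntropy ((Measure.pi fun _ : Fin N => m).map (radProj N))
      (sigmaN N) / (N : ℝ≥0∞)) atTop (𝓝 (relEntropy m (gaussianReal 0 1))) := by
  have hkl := hH.ne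
  rw [relEntropy_eq_klDiv] at hkl
  obtain ⟨hac, hint⟩ := InformationTheory.klDiv_ne_top_iff.1 hkl
  have hlim : relEntropy m (gaussianReal 0 1) =
      ENNReal.ofReal (∫ v, llr m (gaussianReal 0 1) v ∂m) := if_pos ⟨hac, hint⟩
  have ha : 0 ≤ ∫ v, llr m (gaussianReal 0 1) v ∂m := by
    simpa using InformationTheory.integral_llr_add_sub_measure_univ_nonneg hac hint
  set a := ∫ v, llr m (gaussianReal 0 1) v ∂m with ha_def
  set K : ℕ → ℝ≥0∞ := fun N => InformationTheory.klDiv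
    ((Measure.pi fun _ : Fin N => m).map (radProj N)) (sigmaN N) with hK
  have hreal : Tendsto (fun N : ℕ => (K N).toReal / (N : ℝ)) atTop (𝓝 a) := by
    refine tendsto_order.2 ⟨fun b hb => ?_, fun b hb => ?_⟩
    · filter_upwards [eventually_le_klDiv m hac hint hi h1 ((a - b) / 2) (by linarith)] with N hN
      exact lt_of_lt_of_le (by linarith) hN
    · filter_upwards [eventually_gt_atTop 0] with N hN
      have hNp : (0 : ℝ) < N := by exact_mod_cast hN
      refine lt_of_le_of_lt ?_ hb
      rw [div_le_iff₀ hNp, mul_comm]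
      exact ENNReal.toReal_le_of_le_ofReal (by positivity) (klDiv_radProj_le m hac hint N)
  rw [hlim]
  refine (ENNReal.tendsto_ofReal hreal).congr' ?_
  filter_upwards [eventually_gt_atTop 0] with N hN
  have hNp : (0 : ℝ) < N := by exact_mod_cast hN
  have : IsProbabilityMeasure ((Measure.pi fun _ : Fin N => m).map (radProj N)) :=
    Measure.isProbabilityMeasure_map (measurable_radProj N).aemeasurable
  have : IsProbabilityMeasure (sigmaN N) := by
    rw [sigmaN_eq]; exact Measure.isProbabilityMeasure_map (measurable_radProj N).aemeasurable
  have hfin : K N ≠ ⊤ := ((klDiv_radProj_le m hac hint N).trans_lt ENNReal.ofReal_lt_top).ne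
  rw [relEntropy_eq_klDiv, ENNReal.ofReal_div_of_pos hNp, ENNReal.ofReal_toReal hfin,
    ENNReal.ofReal_natCast]

/-- existence of an entropically chaotic family. -/
theorem stmt4 (f : ℝ → ℝ) (hmeas : Measurable f) (hnn : ∀ v, 0 ≤ f v)
    (hint : ∫ v, f v = 1) (h2 : ∫ v, v ^ 2 * f v = 1)
    (h2i : Integrable fun v => v ^ 2 * f v)
    (hH : relEntropy (densityMeasure f) (gaussianReal 0 1) < ⊤) :
    ∃ μN : (N : ℕ) → Measure (Fin N → ℝ),
      (∀ N, IsProbabilityMeasure (μN N)) ∧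
      (∀ N, μN N {v | ∑ i, v i ^ 2 ≠ (N : ℝ)} = 0) ∧
      (∀ N (π : Equiv.Perm (Fin N)),
        Measure.map (fun v i => v (π i)) (μN N) = μN N) ∧
      (∀ k : ℕ, ∀ φ : BoundedContinuousFunction (Fin k → ℝ) ℝ,
        Tendsto (fun N => ∫ x, φ x ∂(marginal N k (μN N))) atTop
          (𝓝 (∫ x, φ x ∂(Measure.pi fun _ : Fin k => densityMeasure f)))) ∧
      Tendsto (fun N => relEntropy (μN N) (sigmaN N) / (N : ℝ≥0∞)) atTop
        (𝓝 (relEntropy (densityMeasure f) (gaussianReal 0 1))) := by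
  have hm := isProbabilityMeasure_densityMeasure f hnn hint
  have hi := integrable_sq_densityMeasure f hmeas hnn h2i
  have h1 := integral_sq_densityMeasure f hmeas hnn h2
  have hkl := hH.ne
  rw [relEntropy_eq_klDiv] at hkl
  have hac := (InformationTheory.klDiv_ne_top_iff.1 hkl).1
  exact ⟨fun N => (Measure.pi fun _ : Fin N => densityMeasure f).map (radProj N),
    fun N => Measure.isProbabilityMeasure_map (measurable_radProj N).aemeasurable,
    map_radProj_sphere _ hac, fun N π => map_perm_radProj _ π,
    tendsto_marginal _ hi h1, tendsto_relEntropy _ hi h1 hH⟩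

end
end

section
/- For every c > 0 there exists δ ∈ (0,1) such that the probability density f = (1−δ) M_a + δ M_b on ℝ, with a = 1/(2(1−δ)) and b = 1/(2δ), satisfies ∫ v² f(v) dv = 1, 0 < H(f|γ) < ∞, and D(f) ≤ c · H(f|γ), where D(f) = ∫_ℝ (−log f(v)) [(f∘f)(v) − f(v)] dv is the entropy production for the Boltzmann–Kac equation. -/
/-!
As `δ → 0` the mixture consists of a narrow Maxwellian of variance close to `1/2` carrying almost
all the mass, and a tiny fraction `δ` of very wide Maxwellian that carries half of the energy.

The relative entropy stays away from zero: `log f` is at least the logarithm of each weighted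
component, which gives `H(f|γ) ≥ (log 2)/2 - (3/2) h(δ)`, `h` being the binary entropy.

The entropy production vanishes: a single Maxwellian is a fixed point of the Wild convolution, so
only collisions between the two components contribute. Since `M_a ≤ √(b/a) M_b` pointwise and
`M_b ⊗ M_b` is rotation invariant, the cross terms are at most `√(b/a) M_b`
(`wild_mixture_le`), whence `f∘f - f ≤ 2 δ √(b/a) M_b` with `√(b/a) ≤ δ^{-1/2}`. Moreover
`0 ≤ -log f ≤ A + δ v²` with `A` of order `log (1/δ)`, because `δ M_b ≤ f ≤ 1`. Integrating,
`D(f) ≤ 2 √δ (A + 1/2) → 0`.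
-/

open MeasureTheory ProbabilityTheory Filter Set Classical
open scoped ENNReal NNReal Topology BigOperators

noncomputable section

/-! ### Moments and elementary bounds for Maxwellians -/

lemma maxwellian_pos {a : ℝ} (ha : 0 < a) (v : ℝ) : 0 < maxwellian a v := by
  unfold maxwellian; positivity

lemma continuous_maxwellian (a : ℝ) : Continuous (maxwellian a) := by
  unfold maxwellian; fun_prop

lemma maxwellian_eq_gaussianPDFReal {a : ℝ} (ha : 0 < a) :
    maxwellian a = gaussianPDFReal 0 a.toNNReal := by
  ext v
  simp only [maxwellian, gaussianPDFReal, Real.coe_toNNReal a ha.le, sub_zero]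
  rw [div_eq_mul_inv, mul_comm]

lemma integrable_maxwellian {a : ℝ} (ha : 0 < a) : Integrable (maxwellian a) := by
  rw [maxwellian_eq_gaussianPDFReal ha]; exact integrable_gaussianPDFReal _ _

lemma integral_maxwellian {a : ℝ} (ha : 0 < a) : ∫ v, maxwellian a v = 1 := by
  rw [maxwellian_eq_gaussianPDFReal ha]
  exact integral_gaussianPDFReal_eq_one _ (by simpa using ha)

lemma integrable_sq_maxwellian {a : ℝ} (ha : 0 < a) :
    Integrable (fun v => v ^ 2 * maxwellian a v) := by
  have h := (memLp_id_gaussianReal (μ := 0) (v := a.toNNReal) 2).integrable_sq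
  rw [gaussianReal_of_var_ne_zero _ (by simpa using ha),
    integrable_withDensity_iff (measurable_gaussianPDF _ _)
      (ae_of_all _ fun _ => gaussianPDF_lt_top)] at h
  simpa [maxwellian_eq_gaussianPDFReal ha, toReal_gaussianPDF] using h

lemma integral_sq_maxwellian {a : ℝ} (ha : 0 < a) :
    ∫ v, v ^ 2 * maxwellian a v = a := by
  have h := variance_fun_id_gaussianReal (μ := 0) (v := a.toNNReal)
  rw [variance_eq_integral (by fun_prop)] at h
  simp only [integral_id_gaussianReal, sub_zero, Real.coe_toNNReal a ha.le] at h
  rw [integral_gaussianReal_eq_integral_smul (by simpa using ha)] at h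
  simpa [maxwellian_eq_gaussianPDFReal ha, mul_comm] using h

lemma log_maxwellian {a : ℝ} (ha : 0 < a) (v : ℝ) :
    Real.log (maxwellian a v) = -(v ^ 2) / (2 * a) - Real.log (2 * Real.pi * a) / 2 := by
  unfold maxwellian
  rw [Real.log_div (by positivity) (by positivity), Real.log_exp, Real.log_sqrt (by positivity)]

lemma maxwellian_le_one {a : ℝ} (h : 1 ≤ 2 * Real.pi * a) (ha : 0 < a) (v : ℝ) :
    maxwellian a v ≤ 1 := by
  unfold maxwellian
  rw [div_le_one (by positivity)]
  calc Real.exp (-(v ^ 2) / (2 * a)) ≤ 1 := by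
        rw [Real.exp_le_one_iff]
        exact div_nonpos_of_nonpos_of_nonneg (by nlinarith [sq_nonneg v]) (by positivity)
    _ ≤ _ := Real.one_le_sqrt.2 h

lemma maxwellian_le_sqrt_mul {a b : ℝ} (ha : 0 < a) (hab : a ≤ b) (v : ℝ) :
    maxwellian a v ≤ Real.sqrt (b / a) * maxwellian b v := by
  have hb : 0 < b := ha.trans_le hab
  have h1 : Real.sqrt (b / a) * maxwellian b v
      = Real.exp (-(v ^ 2) / (2 * b)) / Real.sqrt (2 * Real.pi * a) := by
    unfold maxwellian
    rw [Real.sqrt_div hb.le, Real.sqrt_mul (by positivity) a, Real.sqrt_mul (by positivity) b]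
    field_simp
  rw [h1]
  unfold maxwellian
  have h2 : -(v ^ 2) / (2 * a) ≤ -(v ^ 2) / (2 * b) := by
    rw [neg_div, neg_div, neg_le_neg_iff]
    gcongr
  gcongr

/-- A product of two Maxwellians of the same variance is rotation invariant. -/
lemma maxwellian_mul_of_sq {a x y v w : ℝ} (h : x ^ 2 + y ^ 2 = v ^ 2 + w ^ 2) :
    maxwellian a x * maxwellian a y = maxwellian a v * maxwellian a w := by
  unfold maxwellian
  rw [div_mul_div_comm, div_mul_div_comm, ← Real.exp_add, ← Real.exp_add]
  congr 2
  rw [← add_div, ← add_div]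
  congr 1
  linarith

/-! ### The Wild convolution of a mixture -/

/-- The two diagonal terms are exact by rotation invariance. For the cross terms, the narrow
Maxwellian is dominated by `√(b/a)` times the wide one, after which rotation invariance applies. -/
lemma wild_mixture_le {a b p q : ℝ} (ha : 0 < a) (hab : a ≤ b) (hp : 0 ≤ p) (hq : 0 ≤ q)
    {f : ℝ → ℝ} (hf : f = fun v => p * maxwellian a v + q * maxwellian b v) (v : ℝ) :
    wild f f v ≤ p ^ 2 * maxwellian a v + q ^ 2 * maxwellian b v
      + 2 * p * q * Real.sqrt (b / a) * maxwellian b v := by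
  have hb : 0 < b := ha.trans_le hab
  have hfc : Continuous f := by
    have := continuous_maxwellian a
    have := continuous_maxwellian b
    rw [hf]; fun_prop
  have hf0 : ∀ x, 0 ≤ f x := fun x => by
    have := maxwellian_pos ha x
    have := maxwellian_pos hb x
    rw [hf]; positivity
  set r := Real.sqrt (b / a) with hr
  set B : ℝ → ℝ := fun w => (p ^ 2 * maxwellian a v) * maxwellian a w
      + ((q ^ 2 + 2 * p * q * r) * maxwellian b v) * maxwellian b w with hB
  have key : ∀ w θ : ℝ, f (v * Real.cos θ - w * Real.sin θ) *
      f (v * Real.sin θ + w * Real.cos θ) ≤ B w := by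
    intro w θ
    set x := v * Real.cos θ - w * Real.sin θ with hx
    set y := v * Real.sin θ + w * Real.cos θ with hy
    have hxy : x ^ 2 + y ^ 2 = v ^ 2 + w ^ 2 := by
      rw [hx, hy]; linear_combination (v ^ 2 + w ^ 2) * Real.sin_sq_add_cos_sq θ
    have haa := maxwellian_mul_of_sq (a := a) hxy
    have hbb := maxwellian_mul_of_sq (a := b) hxy
    have h1 : maxwellian a x * maxwellian b y ≤ r * (maxwellian b v * maxwellian b w) := by
      rw [← hbb, ← mul_assoc]
      exact mul_le_mul_of_nonneg_right (maxwellian_le_sqrt_mul ha hab x) (maxwellian_pos hb y).le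
    have h2 : maxwellian b x * maxwellian a y ≤ r * (maxwellian b v * maxwellian b w) := by
      rw [← hbb, mul_left_comm]
      exact mul_le_mul_of_nonneg_left (maxwellian_le_sqrt_mul ha hab y) (maxwellian_pos hb x).le
    have hpq : 0 ≤ p * q := mul_nonneg hp hq
    have h3 := mul_le_mul_of_nonneg_left h1 hpq
    have h4 := mul_le_mul_of_nonneg_left h2 hpq
    simp only [hf, hB]
    linear_combination h3 + h4 + p ^ 2 * haa + q ^ 2 * hbb
  have hinner : ∀ w : ℝ, (∫ θ in (0:ℝ)..(2 * Real.pi), f (v * Real.cos θ - w * Real.sin θ) *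
      f (v * Real.sin θ + w * Real.cos θ)) ≤ 2 * Real.pi * B w := by
    intro w
    have h := intervalIntegral.integral_mono_on (μ := volume) (a := 0) (b := 2 * Real.pi)
      (f := fun θ => f (v * Real.cos θ - w * Real.sin θ) * f (v * Real.sin θ + w * Real.cos θ))
      (g := fun _ => B w) (by positivity)
      (Continuous.intervalIntegrable (by fun_prop) _ _)
      (Continuous.intervalIntegrable (by fun_prop) _ _) (fun θ _ => key w θ)
    simpa using h
  have hBint : Integrable B :=
    ((integrable_maxwellian ha).const_mul _).add ((integrable_maxwellian hb).const_mul _)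
  have houter : (∫ w : ℝ, ∫ θ in (0:ℝ)..(2 * Real.pi), f (v * Real.cos θ - w * Real.sin θ) *
      f (v * Real.sin θ + w * Real.cos θ)) ≤ ∫ w, 2 * Real.pi * B w := by
    apply integral_mono_of_nonneg
    · refine ae_of_all _ fun w => ?_
      exact intervalIntegral.integral_nonneg (by positivity)
        fun θ _ => mul_nonneg (hf0 _) (hf0 _)
    · exact hBint.const_mul _
    · exact ae_of_all _ hinner
  have hBval : ∫ w, B w = p ^ 2 * maxwellian a v + (q ^ 2 + 2 * p * q * r) * maxwellian b v := by
    rw [hB, integral_add ((integrable_maxwellian ha).const_mul _)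
      ((integrable_maxwellian hb).const_mul _), integral_const_mul, integral_const_mul,
      integral_maxwellian ha, integral_maxwellian hb]
    ring
  rw [integral_const_mul, hBval] at houter
  unfold wild
  calc _ ≤ (1 / (2 * Real.pi)) * (2 * Real.pi *
        (p ^ 2 * maxwellian a v + (q ^ 2 + 2 * p * q * r) * maxwellian b v)) := by gcongr
    _ = _ := by field_simp; ring

/-! ### Relative entropy with respect to the standard Gaussian -/

lemma relEntropy_densityMeasure {f : ℝ → ℝ} (hfm : Measurable f) (hf : ∀ v, 0 < f v)
    (hint : Integrable fun v =>
      f v * (Real.log (f v) + v ^ 2 / 2 + Real.log (2 * Real.pi) / 2)) :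
    relEntropy (densityMeasure f) (gaussianReal 0 1) = ENNReal.ofReal
      (∫ v, f v * (Real.log (f v) + v ^ 2 / 2 + Real.log (2 * Real.pi) / 2)) := by
  have hmeas : Measurable fun v => ENNReal.ofReal (f v) := hfm.ennreal_ofReal
  have hac : densityMeasure f ≪ volume := withDensity_absolutelyContinuous _ _
  have hacg : densityMeasure f ≪ gaussianReal 0 1 :=
    hac.trans (gaussianReal_absolutelyContinuous' 0 one_ne_zero)
  have hsf : SigmaFinite (densityMeasure f) := by
    unfold densityMeasure; infer_instance
  have hlog : ∀ᵐ v ∂(volume : Measure ℝ),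
      Real.log ((densityMeasure f).rnDeriv (gaussianReal 0 1) v).toReal
        = Real.log (f v) + v ^ 2 / 2 + Real.log (2 * Real.pi) / 2 := by
    have h1 := Measure.rnDeriv_withDensity_right (densityMeasure f) (volume : Measure ℝ)
      (measurable_gaussianPDF 0 1).aemeasurable
      (ae_of_all _ fun x => (gaussianPDF_pos 0 one_ne_zero x).ne')
      (ae_of_all _ fun x => gaussianPDF_lt_top.ne)
    rw [← gaussianReal_of_var_ne_zero 0 one_ne_zero] at h1
    have h2 : (densityMeasure f).rnDeriv volume =ᵐ[volume] fun v => ENNReal.ofReal (f v) :=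
      Measure.rnDeriv_withDensity _ hmeas
    filter_upwards [h1, h2] with v hv1 hv2
    have hg : gaussianPDFReal 0 1 v = maxwellian 1 v := by
      rw [maxwellian_eq_gaussianPDFReal one_pos]; simp
    rw [hv1, hv2, ENNReal.toReal_mul, ENNReal.toReal_inv, toReal_gaussianPDF, hg,
      ENNReal.toReal_ofReal (hf v).le,
      Real.log_mul (inv_ne_zero (maxwellian_pos one_pos v).ne') (hf v).ne',
      Real.log_inv, log_maxwellian one_pos]
    ring_nf
  have hint' : Integrable (fun v =>
      Real.log ((densityMeasure f).rnDeriv (gaussianReal 0 1) v).toReal) (densityMeasure f) := by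
    unfold densityMeasure
    rw [integrable_withDensity_iff hmeas (ae_of_all _ fun _ => ENNReal.ofReal_lt_top)]
    refine hint.congr ?_
    filter_upwards [hlog] with v hv
    unfold densityMeasure at hv
    rw [hv, ENNReal.toReal_ofReal (hf v).le, mul_comm]
  unfold relEntropy
  rw [if_pos ⟨hacg, hint'⟩]
  congr 1
  rw [integral_congr_ae (hac.ae_le hlog)]
  unfold densityMeasure
  rw [integral_withDensity_eq_integral_toReal_smul hmeas
    (ae_of_all _ fun _ => ENNReal.ofReal_lt_top)]
  simp only [ENNReal.toReal_ofReal (hf _).le, smul_eq_mul]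

/-! ### Choice of the mixing weight -/

/-- As `δ → 0⁺` the entropy of the weights and `√δ log (1/δ)` both tend to `0`. -/
lemma exists_weight (c : ℝ) (hc : 0 < c) : ∃ δ : ℝ, 0 < δ ∧ δ < 1 / 2 ∧
    Real.binEntropy δ ≤ 0.06 ∧
    2 * Real.sqrt δ * (-Real.log δ + (Real.log Real.pi - Real.log δ) / 2 + 1 / 2) ≤ c / 4 := by
  have h1 : Tendsto Real.binEntropy (𝓝[>] 0) (𝓝 0) := by
    have := Real.binEntropy_continuous.tendsto 0
    rw [Real.binEntropy_zero] at this
    exact this.mono_left nhdsWithin_le_nhds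
  have h2 : Tendsto (fun δ : ℝ => Real.log δ * Real.sqrt δ) (𝓝[>] 0) (𝓝 0) := by
    simp_rw [Real.sqrt_eq_rpow]
    exact tendsto_log_mul_rpow_nhdsGT_zero (by norm_num)
  have h3 : Tendsto (fun δ : ℝ => Real.sqrt δ) (𝓝[>] 0) (𝓝 0) := by
    have := Real.continuous_sqrt.tendsto 0
    rw [Real.sqrt_zero] at this
    exact this.mono_left nhdsWithin_le_nhds
  have h4 : Tendsto (fun δ : ℝ =>
      2 * Real.sqrt δ * (-Real.log δ + (Real.log Real.pi - Real.log δ) / 2 + 1 / 2))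
      (𝓝[>] 0) (𝓝 0) := by
    have h := (h2.const_mul (-3)).add (h3.const_mul (Real.log Real.pi + 1))
    simp only [mul_zero, add_zero] at h
    refine h.congr fun δ => ?_
    ring
  have e1 := h1.eventually (ge_mem_nhds (show (0:ℝ) < 0.06 by norm_num))
  have e2 := h4.eventually (ge_mem_nhds (show (0:ℝ) < c / 4 by positivity))
  have e3 : ∀ᶠ δ : ℝ in 𝓝[>] 0, δ < 1 / 2 :=
    nhdsWithin_le_nhds (gt_mem_nhds (by norm_num))
  have e4 : ∀ᶠ δ : ℝ in 𝓝[>] 0, 0 < δ := self_mem_nhdsWithin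
  obtain ⟨δ, ⟨⟨a, b⟩, c⟩, d⟩ := (((e1.and e2).and e3).and e4).exists
  exact ⟨δ, d, c, a, b⟩

/-! ### Entropy and entropy production of the mixture -/

/-- a two-Maxwellian mixture with small entropy production. -/
theorem stmt10 (c : ℝ) (hc : 0 < c) :
    ∃ δ : ℝ, 0 < δ ∧ δ < 1 ∧
      ∀ a b : ℝ, a = 1 / (2 * (1 - δ)) → b = 1 / (2 * δ) →
        ∀ f : ℝ → ℝ,
          (f = fun v => (1 - δ) * maxwellian a v + δ * maxwellian b v) →
          (∫ v, v ^ 2 * f v = 1) ∧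
          0 < relEntropy (densityMeasure f) (gaussianReal 0 1) ∧
          relEntropy (densityMeasure f) (gaussianReal 0 1) < ⊤ ∧
          (∫ v, (-Real.log (f v)) * (wild f f v - f v)) ≤
            c * (relEntropy (densityMeasure f) (gaussianReal 0 1)).toReal := by
  obtain ⟨δ, hδ, hδ2, hent, hsmall⟩ := exists_weight c hc
  refine ⟨δ, hδ, by linarith, ?_⟩
  intro a b ha' hb' f hf
  have hp : 0 < 1 - δ := by linarith
  have ha : 0 < a := by rw [ha']; positivity
  have hb : 0 < b := by rw [hb']; positivity
  have hpa : (1 - δ) * a = 1 / 2 := by rw [ha']; field_simp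
  have hqb : δ * b = 1 / 2 := by rw [hb']; field_simp
  have hab : a ≤ b := by
    rw [ha', hb']
    exact one_div_le_one_div_of_le (by positivity) (by linarith)
  have ha2 : 1 / 2 ≤ a := by nlinarith
  have hlogb : Real.log (2 * Real.pi * b) = Real.log Real.pi - Real.log δ := by
    rw [← Real.log_div Real.pi_ne_zero hδ.ne', hb']
    congr 1; field_simp
  have hloga : Real.log (2 * Real.pi * a) = Real.log Real.pi - Real.log (1 - δ) := by
    rw [← Real.log_div Real.pi_ne_zero hp.ne', ha']
    congr 1; field_simp
  have hv2b : ∀ v : ℝ, v ^ 2 / (2 * b) = δ * v ^ 2 := fun v => by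
    rw [hb']; field_simp
  have hv2a : ∀ v : ℝ, v ^ 2 / (2 * a) = (1 - δ) * v ^ 2 := fun v => by
    rw [ha']; field_simp
  have hMa := fun v => maxwellian_pos ha v
  have hMb := fun v => maxwellian_pos hb v
  have hIa := integrable_maxwellian ha
  have hIb := integrable_maxwellian hb
  have hSa := integrable_sq_maxwellian ha
  have hSb := integrable_sq_maxwellian hb
  have hfv : ∀ v, f v = (1 - δ) * maxwellian a v + δ * maxwellian b v := fun v => by rw [hf]
  have hfpos : ∀ v, 0 < f v := fun v => by
    have := hMa v
    have := hMb v
    rw [hfv]; positivity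
  have hfc : Continuous f := by
    have := continuous_maxwellian a
    have := continuous_maxwellian b
    rw [hf]; fun_prop
  have hpi := Real.pi_gt_three
  have hf1 : ∀ v, f v ≤ 1 := fun v => by
    have h1 := maxwellian_le_one (by nlinarith) ha v
    have h2 := maxwellian_le_one (by nlinarith) hb v
    rw [hfv]; nlinarith
  have hfI : Integrable f := by
    rw [hf]; exact (hIa.const_mul _).add (hIb.const_mul _)
  have hfS : Integrable (fun v => v ^ 2 * f v) := by
    refine ((hSa.const_mul (1 - δ)).add (hSb.const_mul δ)).congr (ae_of_all _ fun v => ?_)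
    simp only [hfv, Pi.add_apply]; ring
  have hsecond : ∫ v, v ^ 2 * f v = 1 := by
    have : ∀ v, v ^ 2 * f v = (1 - δ) * (v ^ 2 * maxwellian a v)
        + δ * (v ^ 2 * maxwellian b v) := fun v => by rw [hfv]; ring
    simp_rw [this]
    rw [integral_add (hSa.const_mul _) (hSb.const_mul _), integral_const_mul, integral_const_mul,
      integral_sq_maxwellian ha, integral_sq_maxwellian hb, hpa, hqb]
    norm_num
  -- `f` dominates each component of the mixture, and the wide one bounds `-log f`.
  set A := -Real.log δ + (Real.log Real.pi - Real.log δ) / 2 with hA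
  have hla : ∀ v, Real.log (1 - δ) - (1 - δ) * v ^ 2
      - (Real.log Real.pi - Real.log (1 - δ)) / 2 ≤ Real.log (f v) := fun v => by
    have h := Real.log_le_log (mul_pos hp (hMa v))
      (show (1 - δ) * maxwellian a v ≤ f v by
        rw [hfv]; linarith [mul_pos hδ (hMb v)])
    rw [Real.log_mul hp.ne' (hMa v).ne', log_maxwellian ha, hloga, neg_div, hv2a] at h
    linarith
  have hlb : ∀ v, -A - δ * v ^ 2 ≤ Real.log (f v) := fun v => by
    have h := Real.log_le_log (mul_pos hδ (hMb v))
      (show δ * maxwellian b v ≤ f v by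
        rw [hfv]; linarith [mul_pos hp (hMa v)])
    rw [Real.log_mul hδ.ne' (hMb v).ne', log_maxwellian hb, hlogb, neg_div, hv2b] at h
    linarith
  have hlog0 : ∀ v, Real.log (f v) ≤ 0 := fun v => Real.log_nonpos (hfpos v).le (hf1 v)
  have hflog : Integrable (fun v => f v * Real.log (f v)) := by
    refine ((hfI.const_mul A).add (hfS.const_mul δ)).mono'
      (hfc.measurable.mul (Real.measurable_log.comp hfc.measurable)).aestronglyMeasurable
      (ae_of_all _ fun v => ?_)
    rw [Real.norm_eq_abs, abs_mul, abs_of_pos (hfpos v), abs_of_nonpos (hlog0 v)]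
    simp only [Pi.add_apply]
    have := mul_le_mul_of_nonneg_left (hlb v) (hfpos v).le
    linarith
  have hHint : Integrable fun v =>
      f v * (Real.log (f v) + v ^ 2 / 2 + Real.log (2 * Real.pi) / 2) := by
    refine ((hflog.add (hfS.const_mul (1 / 2))).add
      (hfI.const_mul (Real.log (2 * Real.pi) / 2))).congr (ae_of_all _ fun v => ?_)
    simp only [Pi.add_apply]; ring
  have hH := relEntropy_densityMeasure hfc.measurable hfpos hHint
  set H := ∫ v, f v * (Real.log (f v) + v ^ 2 / 2 + Real.log (2 * Real.pi) / 2) with hHdef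
  have hH4 : 1 / 4 ≤ H := by
    -- `f log f` is bounded below by the sum of the same expressions for the two components.
    set Ca := Real.log (1 - δ) - (Real.log Real.pi - Real.log (1 - δ)) / 2
      + Real.log (2 * Real.pi) / 2 with hCa
    set Cb := -A + Real.log (2 * Real.pi) / 2 with hCb
    have i1 := (hIa.const_mul ((1 - δ) * Ca)).add (hSa.const_mul ((1 - δ) * (1 / 2 - (1 - δ))))
    have i2 := (hIb.const_mul (δ * Cb)).add (hSb.const_mul (δ * (1 / 2 - δ)))
    have hle := integral_mono (i1.add i2) hHint (fun v => by
      have h1 := mul_le_mul_of_nonneg_left (hla v) (mul_pos hp (hMa v)).le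
      have h2 := mul_le_mul_of_nonneg_left (hlb v) (mul_pos hδ (hMb v)).le
      simp only [Pi.add_apply, hCa, hCb]
      rw [show f v * (Real.log (f v) + v ^ 2 / 2 + Real.log (2 * Real.pi) / 2)
        = (1 - δ) * maxwellian a v * Real.log (f v) + δ * maxwellian b v * Real.log (f v)
          + ((1 - δ) * maxwellian a v + δ * maxwellian b v)
            * (v ^ 2 / 2 + Real.log (2 * Real.pi) / 2) by
          nth_rewrite 1 [hfv v]; ring]
      linarith)
    rw [integral_add' i1 i2, integral_add' (hIa.const_mul _) (hSa.const_mul _),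
      integral_add' (hIb.const_mul _) (hSb.const_mul _), integral_const_mul, integral_const_mul,
      integral_const_mul, integral_const_mul, integral_maxwellian ha, integral_maxwellian hb,
      integral_sq_maxwellian ha, integral_sq_maxwellian hb] at hle
    have hl2 : Real.log (2 * Real.pi) = Real.log 2 + Real.log Real.pi :=
      Real.log_mul two_ne_zero Real.pi_ne_zero
    have hbe : Real.binEntropy δ = -(δ * Real.log δ) - (1 - δ) * Real.log (1 - δ) := by
      rw [Real.binEntropy, Real.log_inv, Real.log_inv]; ring
    have hlt := Real.log_two_gt_d9
    have hval : (1 - δ) * Ca * 1 + (1 - δ) * (1 / 2 - (1 - δ)) * a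
        + (δ * Cb * 1 + δ * (1 / 2 - δ) * b)
        = Real.log 2 / 2 - 3 / 2 * Real.binEntropy δ := by
      rw [hCa, hCb, hA, hl2, hbe]
      linear_combination (1 / 2 - (1 - δ)) * hpa + (1 / 2 - δ) * hqb
    rw [hval] at hle
    have : Real.log 2 / 2 - 3 / 2 * Real.binEntropy δ ≤ H := hle
    norm_num at hlt hent
    linarith
  rw [hH]
  refine ⟨hsecond, ENNReal.ofReal_pos.2 (by linarith), ENNReal.ofReal_lt_top, ?_⟩
  rw [ENNReal.toReal_ofReal (by linarith)]
  set r := Real.sqrt (b / a) with hr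
  have hr0 : 0 ≤ r := Real.sqrt_nonneg _
  have hrδ : δ * r ≤ Real.sqrt δ := by
    have : b / a ≤ 1 / δ := by
      rw [div_le_div_iff₀ ha hδ]; linarith
    calc δ * r ≤ δ * Real.sqrt (1 / δ) := by rw [hr]; gcongr
      _ = Real.sqrt δ := by
        rw [Real.sqrt_div zero_le_one, Real.sqrt_one, mul_one_div, Real.div_sqrt]
  have hA0 : 0 ≤ A := by
    have h1 := Real.log_nonpos hδ.le (by linarith)
    have h2 := Real.log_nonneg (show (1:ℝ) ≤ Real.pi by linarith)
    rw [hA]; linarith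
  set G : ℝ → ℝ := fun v => 2 * δ * r * (A * maxwellian b v + δ * (v ^ 2 * maxwellian b v)) with hG
  have hGI : Integrable G := ((hIb.const_mul A).add (hSb.const_mul δ)).const_mul _
  have hG0 : ∀ v, 0 ≤ G v := fun v => by
    have := hMb v
    simp only [hG]; positivity
  have hGval : ∫ v, G v = 2 * δ * r * (A + 1 / 2) := by
    rw [hG, integral_const_mul, integral_add (hIb.const_mul A) (hSb.const_mul δ),
      integral_const_mul, integral_const_mul, integral_maxwellian hb, integral_sq_maxwellian hb,
      hqb, mul_one]
  -- The loss term cancels the diagonal part of the gain term up to a nonpositive remainder.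
  have hle : ∀ v, (-Real.log (f v)) * (wild f f v - f v) ≤ G v := fun v => by
    have hw := wild_mixture_le ha hab hp.le hδ.le hf v
    have h1 : wild f f v - f v ≤ 2 * δ * r * maxwellian b v := by
      have e1 := mul_pos (mul_pos hδ hp) (hMa v)
      have e2 := mul_pos (mul_pos hδ hp) (hMb v)
      have e3 : 0 ≤ δ * δ * r * maxwellian b v := by
        have := hMb v
        positivity
      have e4 := hfv v
      rw [← hr] at hw
      linarith
    have h2 : 0 ≤ 2 * δ * r * maxwellian b v := by
      have := hMb v
      positivity
    calc _ ≤ (-Real.log (f v)) * (2 * δ * r * maxwellian b v) :=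
          mul_le_mul_of_nonneg_left h1 (by linarith [hlog0 v])
      _ ≤ (A + δ * v ^ 2) * (2 * δ * r * maxwellian b v) :=
          mul_le_mul_of_nonneg_right (by linarith [hlb v]) h2
      _ = G v := by simp only [hG]; ring
  have hD : ∫ v, (-Real.log (f v)) * (wild f f v - f v) ≤ ∫ v, G v := by
    by_cases hi : Integrable fun v => (-Real.log (f v)) * (wild f f v - f v)
    · exact integral_mono hi hGI hle
    · rw [integral_undef hi]; exact integral_nonneg hG0
  calc _ ≤ 2 * δ * r * (A + 1 / 2) := hD.trans_eq hGval
    _ = 2 * (δ * r) * (A + 1 / 2) := by ring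
    _ ≤ 2 * Real.sqrt δ * (A + 1 / 2) := by gcongr
    _ ≤ c / 4 := hsmall
    _ ≤ c * H := by nlinarith

end
end
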